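/- arXiv:2103.04890 — 3 statements merged into one kernel-verified Lean document; each statement's English description precedes it below -/
import Mathlib

section
/- Let k be a nonnegative integer and let f = f₀ + M₂* f₁ with f₀ ∈ M_{3k}(Γ₀⁺(3),χ^k) and f₁ ∈ M_{3k-2}(Γ₀⁺(3),χ^k), where M₂*(z) = (3E₂(3z)+E₂(z))/4. Suppose f is extremal, i.e. v_∞(f) = k (which equals dim 𝑀̃_{3k}^{≤1}(Γ₀⁺(3),χ^k) − 1). Let P(z) = e^{πikz} ∏_{n≥1} (1−qⁿ)^{3k} (1−q^{3n})^{3k} (so that P = M₆^{k/2}, where M₆(z) = η(z)⁶η(3z)⁶; P is nonvanishing on ℍ). Then y := f/P satisfies y″(z) = −4π² (k/2)² M₄(z) y(z) for all z ∈ ℍ, where M₄(z) = (9E₄(3z) + E₄(z))/10. -/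
noncomputable section

open Complex Matrix Filter Topology

abbrev SL2R := Matrix.SpecialLinearGroup (Fin 2) ℝ
abbrev SL2Z := Matrix.SpecialLinearGroup (Fin 2) ℤ

/-- The upper half-plane, as a subset of `ℂ`. -/
def UHP : Set ℂ := {z : ℂ | 0 < z.im}

/-- The embedding of `SL(2,ℤ)` into `SL(2,ℝ)`. -/
def toR : SL2Z →* SL2R := Matrix.SpecialLinearGroup.map (Int.castRingHom ℝ)

/-- `SL(2,ℤ)` as a subgroup of `SL(2,ℝ)`. -/
def SL2ZR : Subgroup SL2R := Subgroup.map toR ⊤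

/-- Möbius action of a real matrix on a complex number. -/
def moeb (γ : SL2R) (z : ℂ) : ℂ :=
  ((γ.1 0 0 : ℂ) * z + (γ.1 0 1 : ℂ)) / ((γ.1 1 0 : ℂ) * z + (γ.1 1 1 : ℂ))

/-- The automorphy factor `cz + d`. -/
def jfac (γ : SL2R) (z : ℂ) : ℂ := (γ.1 1 0 : ℂ) * z + (γ.1 1 1 : ℂ)

/-- A holomorphic modular form of weight `k` and character `χ` on `Γ ≤ SL(2,ℝ)`
(for `Γ` commensurable with `SL(2,ℤ)`): holomorphic on `ℍ`, satisfying the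
transformation law, and holomorphic (bounded) at every cusp. -/
structure IsModularForm (Γ : Subgroup SL2R) (χ : SL2R → ℂ) (k : ℤ) (f : ℂ → ℂ) : Prop where
  holo : DifferentiableOn ℂ f UHP
  transform : ∀ γ ∈ Γ, ∀ z ∈ UHP, f (moeb γ z) = χ γ * jfac γ z ^ k * f z
  bdd_at_cusps : ∀ σ : SL2Z, ∃ C : ℝ, ∀ z ∈ UHP, 1 ≤ z.im →
    ‖jfac (toR σ) z ^ (-k) * f (moeb (toR σ) z)‖ ≤ C

/-- A finite-order character of `Γ`. -/
def IsCharacter (Γ : Subgroup SL2R) (χ : SL2R → ℂ) : Prop :=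
  (∀ γ ∈ Γ, ∀ δ ∈ Γ, χ (γ * δ) = χ γ * χ δ) ∧
    ∃ n : ℕ, 0 < n ∧ ∀ γ ∈ Γ, χ γ ^ n = 1

/-- `φ` is quasimodular of weight 2 and depth 1 on `Γ`, with constant `α`:
`(cz+d)⁻² φ(γz) = φ(z) + α c/(cz+d)`. -/
def IsQuasiWt2 (Γ : Subgroup SL2R) (α : ℂ) (φ : ℂ → ℂ) : Prop :=
  ∀ γ ∈ Γ, ∀ z ∈ UHP,
    (jfac γ z)⁻¹ ^ 2 * φ (moeb γ z) = φ z + α * (γ.1 1 0 : ℂ) / jfac γ z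

/-- `f` has vanishing order `ν` at the cusp `∞`, with respect to `q_N = e^{2πiz/N}`:
`q_N^{-ν}·f(z)` tends to a nonzero constant as `Im z → ∞`. -/
def VOrder (N : ℝ) (f : ℂ → ℂ) (ν : ℝ) : Prop :=
  ∃ c : ℂ, c ≠ 0 ∧ ∀ ε : ℝ, 0 < ε → ∃ Y : ℝ, ∀ z : ℂ, Y ≤ z.im →
    ‖Complex.exp (-(2 * Real.pi * Complex.I * (ν : ℂ) * z / (N : ℂ))) * f z - c‖ < ε


/-- `Γ₀(N)` as a subgroup of `SL(2,ℝ)`. -/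
def Gamma0R (N : ℕ) : Subgroup SL2R := Subgroup.map toR (CongruenceSubgroup.Gamma0 N)

/-- `q = e^{2πiz}`. -/
def qexp (z : ℂ) : ℂ := Complex.exp (2 * Real.pi * Complex.I * z)

/-- `E₂(z) = 1 - 24 ∑_{n≥1} σ₁(n) qⁿ`. -/
def E2 (z : ℂ) : ℂ :=
  1 - 24 * ∑' n : ℕ, (ArithmeticFunction.sigma 1 (n + 1) : ℂ) * qexp z ^ (n + 1)

/-- `E₄(z) = 1 + 240 ∑_{n≥1} σ₃(n) qⁿ`. -/
def E4 (z : ℂ) : ℂ :=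
  1 + 240 * ∑' n : ℕ, (ArithmeticFunction.sigma 3 (n + 1) : ℂ) * qexp z ^ (n + 1)

/-- `S₃ = (1/√3)(0 -1; 3 0)`. -/
def S3elt : SL2R :=
  ⟨!![0, -(Real.sqrt 3)⁻¹; Real.sqrt 3, 0], by
    have h : Real.sqrt 3 ≠ 0 := by positivity
    simp [Matrix.det_fin_two_of, h]⟩

/-- `R₃ = (1/√3)(3 -1; 3 0)`. -/
def R3elt : SL2R :=
  ⟨!![Real.sqrt 3, -(Real.sqrt 3)⁻¹; Real.sqrt 3, 0], by
    have h : Real.sqrt 3 ≠ 0 := by positivity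
    simp [Matrix.det_fin_two_of, h]⟩

/-- `Γ₀⁺(3) = ⟨Γ₀(3), S₃⟩`. -/
def GammaPlus3 : Subgroup SL2R :=
  Subgroup.closure ((Gamma0R 3 : Set SL2R) ∪ {S3elt})

/-- Modular forms of weight `k` with character `χ` on `Γ ≤ SL(2,ℝ)` whose only cusp
is `∞`: holomorphic on `ℍ`, transforming with `χ·(cz+d)^k`, holomorphic at `∞`. -/
def MFchar (Γ : Subgroup SL2R) (χ : SL2R → ℂ) (k : ℤ) (f : ℂ → ℂ) : Prop :=
  DifferentiableOn ℂ f UHP ∧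
    (∀ γ ∈ Γ, ∀ z ∈ UHP, f (moeb γ z) = χ γ * jfac γ z ^ k * f z) ∧
    ∃ C : ℝ, ∀ z ∈ UHP, 1 ≤ z.im → ‖f z‖ ≤ C

/-- `M₂*(z) = (3E₂(3z) + E₂(z))/4`. -/
def M2star3 (z : ℂ) : ℂ := (3 * E2 (3 * z) + E2 z) / 4

/-- `M₄(z) = (9E₄(3z) + E₄(z))/10`. -/
def M4plus3 (z : ℂ) : ℂ := (9 * E4 (3 * z) + E4 z) / 10

/-- `P(z) = e^{πikz} ∏_{n≥1} (1-qⁿ)^{3k}(1-q^{3n})^{3k}` (equal to `M₆(z)^{k/2}` where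
`M₆ = η(z)⁶η(3z)⁶`; nonvanishing on `ℍ`). -/
def Pfun3 (k : ℕ) (z : ℂ) : ℂ :=
  Complex.exp (Real.pi * Complex.I * k * z) *
    ∏' n : ℕ, ((1 - qexp z ^ (n + 1)) ^ (3 * k) * (1 - qexp z ^ (3 * (n + 1))) ^ (3 * k))

/-!
Put `y = f / P` and `u = z y + 3 / (π i) f₁ / P`. The pair `(y, u)` is a vector-valued form of
weight `-1`: up to constants, `z ↦ z + 1` sends it to `(y, u + y)` and `z ↦ -1 / (3 z)` exchanges
`y` and `u`. Hence the Wronskian of `y` and `u` has weight `0`. Extremality bounds it at `∞`, so it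
is a constant, and a nonzero one because `y` and `u` are not proportional. Differentiating it gives
`y″ = φ y`, where `φ` is the Wronskian of `u′` and `y′` divided by this constant; so `φ` is
holomorphic, and it has weight `4` by Bol's identity. At `∞` the function `y` behaves like
`exp (π i k z)`, so `φ` tends to `(π i k)²` there. Then `φ = (π i k)² M₄`, because a form of
weight less than `6` that vanishes at `∞` is zero.
-/

local notation "I∞" => Filter.comap Complex.im Filter.atTop

/-! ### The upper half-plane and the Fricke involution -/

theorem isOpen_UHP : IsOpen UHP := isOpen_lt continuous_const continuous_im

theorem UHP_mem_nhds {z : ℂ} (hz : z ∈ UHP) : UHP ∈ 𝓝 z := isOpen_UHP.mem_nhds hz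

theorem ne_zero_of_mem_UHP {z : ℂ} (hz : z ∈ UHP) : z ≠ 0 := by
  rintro rfl
  exact lt_irrefl (0 : ℝ) hz

theorem add_one_mem_UHP_iff {z : ℂ} : z + 1 ∈ UHP ↔ z ∈ UHP := by
  simp [UHP]

theorem three_mul_mem_UHP {z : ℂ} (hz : z ∈ UHP) : 3 * z ∈ UHP := by
  simpa [UHP] using hz

theorem eventually_mem_UHP : ∀ᶠ z in I∞, z ∈ UHP :=
  (eventually_gt_atTop (0 : ℝ)).comap im

instance comap_im_atTop_neBot : (I∞).NeBot :=
  comap_neBot_iff_frequently.mpr (Frequently.of_forall fun y => ⟨y * I, by simp⟩)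

theorem eventually_comap_im_iff {p : ℂ → Prop} :
    (∀ᶠ z in I∞, p z) ↔ ∃ Y : ℝ, ∀ z : ℂ, Y ≤ z.im → p z := by
  simp only [eventually_comap, eventually_atTop]
  exact exists_congr fun Y => ⟨fun h z hz => h _ hz z rfl, fun h _ hb z hz => h z (hz ▸ hb)⟩

theorem tendsto_three_mul_comap_im : Tendsto (fun z : ℂ => 3 * z) I∞ I∞ := by
  refine tendsto_comap_iff.mpr ?_
  simpa [Function.comp_def] using tendsto_comap.const_mul_atTop (by norm_num : (0 : ℝ) < 3)

/-- The Fricke involution `z ↦ -1 / (N z)`. For `N = 3` it is the action of `S₃`, and together with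
`z ↦ z + 1` it generates the image of `Γ₀⁺(3)` in `PSL(2, ℝ)`. -/
def fricke (N : ℝ) (z : ℂ) : ℂ := -1 / (N * z)

theorem fricke_im (N : ℝ) (z : ℂ) : (fricke N z).im = z.im / (N * normSq z) := by
  rcases eq_or_ne z 0 with rfl | hz
  · simp [fricke]
  rcases eq_or_ne N 0 with rfl | hN
  · simp [fricke]
  have hz' : normSq z ≠ 0 := normSq_eq_zero.not.mpr hz
  simp only [fricke, div_im, neg_im, one_im, neg_re, one_re, mul_im, ofReal_re, ofReal_im,
    normSq_mul, normSq_ofReal]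
  field_simp
  ring

theorem fricke_mem_UHP {N : ℝ} (hN : 0 < N) {z : ℂ} (hz : z ∈ UHP) : fricke N z ∈ UHP := by
  have hz' : 0 < normSq z := normSq_pos.mpr (ne_zero_of_mem_UHP hz)
  have him : 0 < z.im := hz
  rw [UHP, Set.mem_ofPred_eq, fricke_im]
  positivity

theorem hasDerivAt_fricke (N : ℝ) {z : ℂ} (hz : z ≠ 0) :
    HasDerivAt (fricke N) (1 / (N * z ^ 2)) z := by
  have h := (hasDerivAt_inv hz).const_mul (-1 / (N : ℂ))
  rw [show fricke N = fun w => -1 / (N : ℂ) * w⁻¹ from funext fun w => by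
    rw [fricke, div_mul_eq_div_div, div_eq_mul_inv _ w]]
  refine h.congr_deriv ?_
  rw [div_mul_eq_mul_div, neg_one_mul, neg_neg, ← one_div, div_div, mul_comm (z ^ 2)]

theorem exists_pos_mul_quarter_add_sq_lt_one {N : ℝ} (hN : 0 < N) (hN4 : N < 4) :
    ∃ Y > 0, N * (1 / 4 + Y ^ 2) < 1 := by
  have hpos : 0 < (4 - N) / (8 * N) := div_pos (sub_pos.mpr hN4) (by positivity)
  refine ⟨√((4 - N) / (8 * N)), Real.sqrt_pos.mpr hpos, ?_⟩
  rw [Real.sq_sqrt hpos.le]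
  field_simp
  linarith

theorem forall_mem_UHP_of_forall_le_im {N Y : ℝ} (hN : 0 < N) (hY : 0 < Y)
    (hNY : N * (1 / 4 + Y ^ 2) < 1) {p : ℂ → Prop} (add_one : ∀ z ∈ UHP, p (z + 1) ↔ p z)
    (fricke : ∀ z ∈ UHP, p (fricke N z) → p z) (top : ∀ z, Y ≤ z.im → p z) :
    ∀ z ∈ UHP, p z := by
  have periodic : Function.Periodic (fun z => z ∈ UHP → p z) 1 := fun z => by
    simp only [add_one_mem_UHP_iff]
    exact propext (forall_congr' (add_one z))
  -- Below height `Y`, moving `z` into `|re z| ≤ 1/2` and inverting raises `im z` by a fixed factor.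
  set ρ := N * (1 / 4 + Y ^ 2) with hρ
  have level (n : ℕ) : ∀ z, ρ ^ n * Y ≤ z.im → p z := by
    induction n with
    | zero => simpa using top
    | succ n ih =>
      intro z hz
      have hzpos : 0 < z.im := lt_of_lt_of_le (by positivity) hz
      rcases le_or_gt Y z.im with hYz | hYz
      · exact top z hYz
      set w : ℂ := z + (-round z.re : ℤ) with hw
      have hwim : w.im = z.im := by simp [hw]
      have hwU : w ∈ UHP := by rwa [UHP, Set.mem_ofPred_eq, hwim]
      have hwre : |w.re| ≤ 1 / 2 := by
        simpa [hw, ← sub_eq_add_neg] using abs_sub_round z.re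
      suffices hpw : p w by
        have hzw : (w ∈ UHP → p w) = (z ∈ UHP → p z) := by
          simpa [hw] using periodic.int_mul (-round z.re) z
        exact hzw.mp (fun _ => hpw) hzpos
      refine fricke w hwU (ih _ ?_)
      have hnorm : normSq w ≤ 1 / 4 + Y ^ 2 := by
        rw [normSq_apply, hwim]
        nlinarith [abs_le.mp hwre]
      rw [fricke_im, hwim, le_div_iff₀ (mul_pos hN (normSq_pos.mpr (ne_zero_of_mem_UHP hwU)))]
      calc ρ ^ n * Y * (N * normSq w) ≤ ρ ^ n * Y * ρ := by rw [hρ]; gcongr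
        _ = ρ ^ (n + 1) * Y := by ring
        _ ≤ z.im := hz
  intro z hz
  obtain ⟨n, hn⟩ := exists_pow_lt_of_lt_one (div_pos hz hY) hNY
  exact level n z ((lt_div_iff₀ hY).mp hn).le

/-! ### Periodic functions as functions of `q` -/

theorem qexp_eq_qParam (z : ℂ) : qexp z = Function.Periodic.qParam 1 z := by
  simp [qexp, Function.Periodic.qParam]

theorem qexp_ne_zero (z : ℂ) : qexp z ≠ 0 := exp_ne_zero _

theorem norm_qexp (z : ℂ) : ‖qexp z‖ = Real.exp (-(2 * Real.pi * z.im)) := by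
  simp [qexp, norm_exp]

theorem norm_qexp_lt_one {z : ℂ} (hz : z ∈ UHP) : ‖qexp z‖ < 1 := by
  rw [qexp_eq_qParam]
  exact Function.Periodic.norm_qParam_lt_one one_pos hz

theorem qexp_add_one (z : ℂ) : qexp (z + 1) = qexp z := by
  rw [qexp, mul_add, mul_one, exp_periodic, qexp]

theorem qexp_three_mul (z : ℂ) : qexp (3 * z) = qexp z ^ 3 := by
  rw [qexp, qexp, ← exp_nat_mul]
  push_cast
  ring_nf

theorem differentiable_qexp : Differentiable ℂ qexp := by
  unfold qexp
  fun_prop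

theorem tendsto_qexp : Tendsto qexp I∞ (𝓝 0) := by
  rw [funext qexp_eq_qParam]
  exact (Function.Periodic.qParam_tendsto one_pos).mono_right nhdsWithin_le_nhds

theorem exists_differentiableOn_ball_comp_qexp {g : ℂ → ℂ} (hg : DifferentiableOn ℂ g UHP)
    (hper : ∀ z ∈ UHP, g (z + 1) = g z) (hbdd : BoundedAtFilter I∞ g) :
    ∃ G : ℂ → ℂ, DifferentiableOn ℂ G (Metric.ball 0 1) ∧ ∀ z ∈ UHP, g z = G (qexp z) := by
  set g₀ : ℂ → ℂ := UHP.indicator g with hg₀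
  have eqOn : Set.EqOn g₀ g UHP := Set.eqOn_indicator
  have differentiableAt {z : ℂ} (hz : z ∈ UHP) : DifferentiableAt ℂ g₀ z :=
    (hg.congr eqOn).differentiableAt (UHP_mem_nhds hz)
  have periodic : Function.Periodic g₀ (1 : ℝ) := by
    intro z
    by_cases hz : z ∈ UHP <;> simp [hg₀, add_one_mem_UHP_iff, hz, hper]
  refine ⟨Function.Periodic.cuspFunction 1 g₀, fun q hq => ?_, fun z hz => ?_⟩
  · refine DifferentiableAt.differentiableWithinAt ?_
    rcases eq_or_ne q 0 with rfl | hq₀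
    · refine Function.Periodic.differentiableAt_cuspFunction_zero one_pos periodic
        (eventually_mem_UHP.mono fun z hz => differentiableAt hz) ?_
      exact hbdd.congr' (eventually_mem_UHP.mono fun z hz => (eqOn hz).symm) EventuallyEq.rfl
    · have := Function.Periodic.differentiableAt_cuspFunction one_ne_zero periodic
        (differentiableAt (Function.Periodic.im_invQParam_pos_of_norm_lt_one one_pos
          (mem_ball_zero_iff.mp hq) hq₀))
      rwa [Function.Periodic.qParam_right_inv one_ne_zero hq₀] at this
  · rw [qexp_eq_qParam, Function.Periodic.eq_cuspFunction one_ne_zero periodic, eqOn hz]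

theorem isBigO_qexp_of_tendsto_zero {g : ℂ → ℂ} (hg : DifferentiableOn ℂ g UHP)
    (hper : ∀ z ∈ UHP, g (z + 1) = g z) (hlim : Tendsto g I∞ (𝓝 0)) : g =O[I∞] qexp := by
  obtain ⟨G, hG, hgG⟩ := exists_differentiableOn_ball_comp_qexp hg hper (hlim.isBigO_one ℝ)
  have hGd : DifferentiableAt ℂ G 0 :=
    hG.differentiableAt (Metric.ball_mem_nhds 0 one_pos)
  have heq : g =ᶠ[I∞] G ∘ qexp := eventually_mem_UHP.mono hgG
  have hG₀ : G 0 = 0 := tendsto_nhds_unique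
    (hGd.continuousAt.tendsto.comp tendsto_qexp) (hlim.congr' heq)
  refine heq.trans_isBigO ?_
  simpa [Function.comp_def, hG₀] using hGd.isBigO_sub.comp_tendsto tendsto_qexp

/-! ### Forms on the Hecke group -/

/-- A holomorphic function on `UHP` that is a form of weight `w` and trivial multiplier for the
group generated by `z ↦ z + 1` and `fricke N`. No growth condition at `∞` is imposed. -/
structure IsHeckeForm (N : ℝ) (w : ℕ) (h : ℂ → ℂ) : Prop where
  differentiableOn : DifferentiableOn ℂ h UHP
  add_one : ∀ z ∈ UHP, h (z + 1) = h z
  fricke : ∀ z ∈ UHP, h (fricke N z) = (√N * z) ^ w * h z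

namespace IsHeckeForm

variable {N : ℝ} {w : ℕ} {g h : ℂ → ℂ}

theorem sub_const_mul (hg : IsHeckeForm N w g) (hh : IsHeckeForm N w h) (c : ℂ) :
    IsHeckeForm N w fun z => g z - c * h z where
  differentiableOn := hg.differentiableOn.sub (hh.differentiableOn.const_mul c)
  add_one z hz := by rw [hg.add_one z hz, hh.add_one z hz]
  fricke z hz := by rw [hg.fricke z hz, hh.fricke z hz]; ring

theorem pow (hh : IsHeckeForm N w h) (n : ℕ) : IsHeckeForm N (w * n) fun z => h z ^ n where
  differentiableOn := hh.differentiableOn.pow n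
  add_one z hz := by rw [hh.add_one z hz]
  fricke z hz := by rw [hh.fricke z hz, mul_pow, pow_mul]

theorem div (hN : 0 < N) (hg : IsHeckeForm N w g) (hh : IsHeckeForm N w h)
    (h_ne : ∀ z ∈ UHP, h z ≠ 0) : IsHeckeForm N 0 fun z => g z / h z where
  differentiableOn := hg.differentiableOn.div hh.differentiableOn h_ne
  add_one z hz := by rw [hg.add_one z hz, hh.add_one z hz]
  fricke z hz := by
    have hz₀ := ne_zero_of_mem_UHP hz
    have hsqrt : (√N : ℂ) ≠ 0 := ofReal_ne_zero.mpr (Real.sqrt_pos.mpr hN).ne'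
    rw [hg.fricke z hz, hh.fricke z hz, mul_div_mul_left _ _ (by positivity), pow_zero, one_mul]

theorem exists_eq_const_of_weight_zero (hN : 0 < N) (hN4 : N < 4) (hg : IsHeckeForm N 0 g)
    (hbdd : BoundedAtFilter I∞ g) : ∃ c, ∀ z ∈ UHP, g z = c := by
  obtain ⟨G, hG, hgG⟩ := exists_differentiableOn_ball_comp_qexp hg.differentiableOn hg.add_one hbdd
  obtain ⟨Y, hY, hNY⟩ := exists_pos_mul_quarter_add_sq_lt_one hN hN4
  set r := Real.exp (-(2 * Real.pi * Y)) with hr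
  have hr₁ : r < 1 := Real.exp_lt_one_iff.mpr (by have := Real.pi_pos; nlinarith)
  have hsub : Metric.closedBall (0 : ℂ) r ⊆ Metric.ball 0 1 := Metric.closedBall_subset_ball hr₁
  have h₀ : (0 : ℂ) ∈ Metric.closedBall 0 r := Metric.mem_closedBall_self (Real.exp_pos _).le
  obtain ⟨q₀, hq₀, hmax⟩ := (isCompact_closedBall (0 : ℂ) r).exists_isMaxOn ⟨0, h₀⟩
    (hG.continuousOn.mono hsub).norm
  have le_max : ∀ z ∈ UHP, ‖g z‖ ≤ ‖G q₀‖ := by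
    refine forall_mem_UHP_of_forall_le_im hN hY hNY (fun z hz => by rw [hg.add_one z hz])
      (fun z hz => by rw [hg.fricke z hz, pow_zero, one_mul]; exact id) fun z hz => ?_
    rw [hgG z (hY.trans_le hz)]
    refine hmax (mem_closedBall_zero_iff.mpr ?_)
    rw [norm_qexp, hr]
    gcongr
  have hmax_ball : IsMaxOn (norm ∘ G) (Metric.ball 0 1) q₀ := by
    intro q hq
    rcases eq_or_ne q 0 with rfl | hq_ne
    · exact hmax h₀
    · have hU : Function.Periodic.invQParam 1 q ∈ UHP :=
        Function.Periodic.im_invQParam_pos_of_norm_lt_one one_pos (mem_ball_zero_iff.mp hq) hq_ne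
      have := le_max _ hU
      rwa [hgG _ hU, qexp_eq_qParam, Function.Periodic.qParam_right_inv one_ne_zero hq_ne] at this
  have hconst := eqOn_of_isPreconnected_of_isMaxOn_norm (convex_ball (0 : ℂ) 1).isPreconnected
    Metric.isOpen_ball hG (hsub hq₀) hmax_ball
  exact ⟨G q₀, fun z hz =>
    (hgG z hz).trans (hconst (mem_ball_zero_iff.mpr (norm_qexp_lt_one hz)))⟩

end IsHeckeForm

/-! ### Derivatives near `i∞` -/

section Asymptotics

variable {s y : ℂ → ℂ}

theorem norm_deriv_le_of_forall_le_im {C Y : ℝ} (hs : DifferentiableOn ℂ s UHP) (hY : 0 < Y)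
    (hC : ∀ z, Y ≤ z.im → ‖s z‖ ≤ C) {z : ℂ} (hz : Y + 1 ≤ z.im) : ‖deriv s z‖ ≤ C := by
  have him : ∀ w ∈ Metric.closedBall z 1, Y ≤ w.im := by
    intro w hw
    have := (abs_le.mp ((abs_im_le_norm (w - z)).trans (mem_closedBall_iff_norm.mp hw))).1
    rw [sub_im] at this
    linarith
  have hd : DiffContOnCl ℂ s (Metric.ball z 1) := by
    refine DifferentiableOn.diffContOnCl (hs.mono fun w hw => ?_)
    rw [closure_ball _ one_ne_zero] at hw
    exact hY.trans_le (him w hw)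
  simpa using norm_deriv_le_of_forall_mem_sphere_norm_le one_pos hd
    fun w hw => hC w (him w (Metric.sphere_subset_closedBall hw))

theorem eventually_norm_deriv_le {C : ℝ} (hs : DifferentiableOn ℂ s UHP)
    (hC : ∀ᶠ z in I∞, ‖s z‖ ≤ C) : ∀ᶠ z in I∞, ‖deriv s z‖ ≤ C := by
  obtain ⟨Y, hY⟩ := eventually_comap_im_iff.mp hC
  exact eventually_comap_im_iff.mpr ⟨max Y 1 + 1, fun z hz =>
    norm_deriv_le_of_forall_le_im hs (by positivity) (fun w hw => hY w (le_of_max_le_left hw)) hz⟩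

theorem boundedAtFilter_deriv (hs : DifferentiableOn ℂ s UHP) (hb : BoundedAtFilter I∞ s) :
    BoundedAtFilter I∞ (deriv s) := by
  obtain ⟨C, hC⟩ := hb.bound
  refine .of_bound C ?_
  simpa using eventually_norm_deriv_le hs (by simpa using hC)

theorem tendsto_deriv_zero {c : ℂ} (hs : DifferentiableOn ℂ s UHP) (hlim : Tendsto s I∞ (𝓝 c)) :
    Tendsto (deriv s) I∞ (𝓝 0) := by
  rw [Metric.nhds_basis_closedBall.tendsto_right_iff] at hlim ⊢
  intro δ hδ
  have := eventually_norm_deriv_le (hs.sub_const c) (by simpa [dist_eq_norm] using hlim δ hδ)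
  simpa using this

theorem exp_mul_deriv_eq (a : ℂ) (hy : DifferentiableOn ℂ y UHP) {z : ℂ} (hz : z ∈ UHP) :
    exp (a * z) * deriv y z = deriv (fun w => exp (a * w) * y w) z - a * (exp (a * z) * y z) := by
  have hexp : HasDerivAt (fun w => exp (a * w)) (exp (a * z) * a) z := by
    simpa using ((hasDerivAt_id z).const_mul a).cexp
  rw [(hexp.fun_mul (hy.differentiableAt (UHP_mem_nhds hz)).hasDerivAt).deriv]
  ring

theorem differentiableOn_exp_mul (a : ℂ) (hy : DifferentiableOn ℂ y UHP) :
    DifferentiableOn ℂ (fun w => exp (a * w) * y w) UHP :=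
  DifferentiableOn.mul (by fun_prop) hy

theorem tendsto_exp_mul_deriv {a c : ℂ} (hy : DifferentiableOn ℂ y UHP)
    (hlim : Tendsto (fun z => exp (a * z) * y z) I∞ (𝓝 c)) :
    Tendsto (fun z => exp (a * z) * deriv y z) I∞ (𝓝 (-a * c)) := by
  have h := (tendsto_deriv_zero (differentiableOn_exp_mul a hy) hlim).sub (hlim.const_mul a)
  rw [zero_sub, ← neg_mul] at h
  exact h.congr' (eventually_mem_UHP.mono fun z hz => (exp_mul_deriv_eq a hy hz).symm)

theorem boundedAtFilter_exp_mul_deriv {a : ℂ} (hy : DifferentiableOn ℂ y UHP)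
    (hb : BoundedAtFilter I∞ fun z => exp (a * z) * y z) :
    BoundedAtFilter I∞ fun z => exp (a * z) * deriv y z := by
  have h := (boundedAtFilter_deriv (differentiableOn_exp_mul a hy) hb).sub (hb.const_mul_left a)
  exact h.congr' (eventually_mem_UHP.mono fun z hz => (exp_mul_deriv_eq a hy hz).symm) .rfl

theorem tendsto_potential {a c : ℂ} {φ : ℂ → ℂ} (hy : DifferentiableOn ℂ y UHP) (hc : c ≠ 0)
    (hlim : Tendsto (fun z => exp (a * z) * y z) I∞ (𝓝 c))
    (hφ : ∀ z ∈ UHP, deriv (deriv y) z = φ z * y z) : Tendsto φ I∞ (𝓝 (a ^ 2)) := by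
  have h := (tendsto_exp_mul_deriv (hy.deriv isOpen_UHP) (tendsto_exp_mul_deriv hy hlim)).div
    hlim hc
  rw [← mul_assoc, mul_div_cancel_right₀ _ hc, neg_mul_neg, ← sq] at h
  refine h.congr' ?_
  filter_upwards [eventually_mem_UHP, hlim.eventually_ne hc] with z hz hyz
  rw [Pi.div_apply, hφ z hz, div_eq_iff hyz]
  ring

end Asymptotics

/-! ### Wronskians -/

/-- The Wronskian `y u′ - y′ u`. -/
def wronskian (y u : ℂ → ℂ) (z : ℂ) : ℂ := y z * deriv u z - deriv y z * u z

section Wronskian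

variable {y u B : ℂ → ℂ}

theorem differentiableOn_wronskian (hy : DifferentiableOn ℂ y UHP)
    (hu : DifferentiableOn ℂ u UHP) : DifferentiableOn ℂ (wronskian y u) UHP :=
  (hy.mul (hu.deriv isOpen_UHP)).sub ((hy.deriv isOpen_UHP).mul hu)

theorem deriv_wronskian (hy : DifferentiableOn ℂ y UHP) (hu : DifferentiableOn ℂ u UHP) {z : ℂ}
    (hz : z ∈ UHP) :
    deriv (wronskian y u) z = y z * deriv (deriv u) z - deriv (deriv y) z * u z := by
  have hasDerivAt {g : ℂ → ℂ} (hg : DifferentiableOn ℂ g UHP) : HasDerivAt g (deriv g z) z :=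
    (hg.differentiableAt (UHP_mem_nhds hz)).hasDerivAt
  have h := ((hasDerivAt hy).mul (hasDerivAt (hu.deriv isOpen_UHP))).sub
    ((hasDerivAt (hy.deriv isOpen_UHP)).mul (hasDerivAt hu))
  exact (h.congr_deriv (by ring)).deriv

theorem exists_eq_const_mul_of_wronskian_eq_zero {U : Set ℂ} (hU : IsOpen U)
    (hU' : IsPreconnected U) (hy : DifferentiableOn ℂ y U) (hu : DifferentiableOn ℂ u U)
    (hy_ne : ∀ z ∈ U, y z ≠ 0) (hW : ∀ z ∈ U, wronskian y u z = 0) :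
    ∃ c, ∀ z ∈ U, u z = c * y z := by
  obtain ⟨c, hc⟩ := hU.exists_is_const_of_deriv_eq_zero hU' (hu.div hy hy_ne) fun z hz => by
    have h := (hu.differentiableAt (hU.mem_nhds hz)).hasDerivAt.div
      (hy.differentiableAt (hU.mem_nhds hz)).hasDerivAt (hy_ne z hz)
    have hWz := hW z hz
    rw [wronskian] at hWz
    rw [h.deriv, Pi.zero_apply, div_eq_zero_iff]
    exact .inl (by linear_combination hWz)
  exact ⟨c, fun z hz => (div_eq_iff (hy_ne z hz)).mp (hc z hz)⟩

theorem wronskian_id_mul_add_const_mul (α : ℂ) {z : ℂ} (hy : DifferentiableAt ℂ y z)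
    (hB : DifferentiableAt ℂ B z) :
    wronskian y (fun w => w * y w + α * B w) z = y z ^ 2 + α * wronskian y B z := by
  have h : HasDerivAt (fun w => w * y w + α * B w)
      (1 * y z + z * deriv y z + α * deriv B z) z :=
    ((hasDerivAt_id z).mul hy.hasDerivAt).add (hB.hasDerivAt.const_mul α)
  rw [wronskian, wronskian, h.deriv]
  ring

theorem boundedAtFilter_wronskian {a : ℂ} (hy : DifferentiableOn ℂ y UHP)
    (hu : DifferentiableOn ℂ u UHP) (hyb : BoundedAtFilter I∞ fun z => exp (a * z) * y z)
    (hub : BoundedAtFilter I∞ fun z => exp (-a * z) * u z) :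
    BoundedAtFilter I∞ (wronskian y u) := by
  have h := (hyb.mul (boundedAtFilter_exp_mul_deriv hu hub)).sub
    ((boundedAtFilter_exp_mul_deriv hy hyb).mul hub)
  refine h.congr_left fun z => ?_
  have hexp : exp (a * z) * exp (-a * z) = 1 := by rw [← exp_add]; simp
  simp only [Pi.mul_apply, wronskian]
  linear_combination (y z * deriv u z - deriv y z * u z) * hexp

theorem boundedAtFilter_wronskian_id_mul_add_const_mul {a : ℂ} (α : ℂ)
    (hy : DifferentiableOn ℂ y UHP) (hB : DifferentiableOn ℂ B UHP)
    (hexp : BoundedAtFilter I∞ fun z => exp (-a * z))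
    (hyb : BoundedAtFilter I∞ fun z => exp (a * z) * y z)
    (hBb : BoundedAtFilter I∞ fun z => exp (-a * z) * B z) :
    BoundedAtFilter I∞ (wronskian y fun w => w * y w + α * B w) := by
  have hy_bdd : BoundedAtFilter I∞ y := (hexp.mul hyb).congr_left fun z => by
    rw [Pi.mul_apply, ← mul_assoc, ← exp_add, neg_mul, neg_add_cancel, exp_zero, one_mul]
  have h := (hy_bdd.mul hy_bdd).add
    ((boundedAtFilter_wronskian hy hB hyb hBb).const_mul_left α)
  refine h.congr' (eventually_mem_UHP.mono fun z hz => ?_) .rfl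
  rw [wronskian_id_mul_add_const_mul α (hy.differentiableAt (UHP_mem_nhds hz))
    (hB.differentiableAt (UHP_mem_nhds hz)), sq]
  rfl

end Wronskian

/-! ### Weight `-1` pairs -/

/-- Two holomorphic functions spanning a two-dimensional space of weight `-1`: `z ↦ z + 1` acts on
the pair by a unipotent matrix times the sign `σ`, and `fricke N` exchanges the functions up to
the sign `ε`. -/
structure IsFrickePair (N : ℝ) (σ ε : ℂ) (y u : ℂ → ℂ) : Prop where
  differentiableOn_left : DifferentiableOn ℂ y UHP
  differentiableOn_right : DifferentiableOn ℂ u UHP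
  shift_sq : σ ^ 2 = 1
  sign_sq : ε ^ 2 = 1
  left_add_one : ∀ z ∈ UHP, y (z + 1) = σ * y z
  right_add_one : ∀ z ∈ UHP, u (z + 1) = σ * (u z + y z)
  left_fricke : ∀ z ∈ UHP, y (fricke N z) = ε * u z / z
  right_fricke : ∀ z ∈ UHP, u (fricke N z) = -(ε / N) * y z / z

theorem deriv_add_one_of_eqOn {F G : ℂ → ℂ} (h : ∀ z ∈ UHP, F (z + 1) = G z) {z : ℂ}
    (hz : z ∈ UHP) : deriv F (z + 1) = deriv G z := by
  rw [← deriv_comp_add_const]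
  exact (eventuallyEq_of_mem (UHP_mem_nhds hz) h).deriv_eq

theorem deriv_fricke_of_eqOn {N : ℝ} (hN : 0 < N) {F G : ℂ → ℂ} (hF : DifferentiableOn ℂ F UHP)
    (h : ∀ z ∈ UHP, F (fricke N z) = G z) {z G' : ℂ} (hz : z ∈ UHP) (hG : HasDerivAt G G' z) :
    deriv F (fricke N z) = N * z ^ 2 * G' := by
  have hz₀ := ne_zero_of_mem_UHP hz
  have hN₀ : (N : ℂ) ≠ 0 := ofReal_ne_zero.mpr hN.ne'
  have hcomp := (hF.differentiableAt (UHP_mem_nhds (fricke_mem_UHP hN hz))).hasDerivAt.comp z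
    (hasDerivAt_fricke N hz₀)
  rw [hG.unique (hcomp.congr_of_eventuallyEq
    (eventuallyEq_of_mem (UHP_mem_nhds hz) fun w hw => (h w hw).symm))]
  field_simp

section Bol

variable {N : ℝ} {c : ℂ} {F G : ℂ → ℂ}

theorem deriv_fricke_of_weight_neg_one (hN : 0 < N) (hF : DifferentiableOn ℂ F UHP)
    (hG : DifferentiableOn ℂ G UHP) (h : ∀ z ∈ UHP, F (fricke N z) = c * G z / z) {z : ℂ}
    (hz : z ∈ UHP) : deriv F (fricke N z) = N * c * (z * deriv G z - G z) := by
  have hz₀ := ne_zero_of_mem_UHP hz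
  have hG' := (hG.differentiableAt (UHP_mem_nhds hz)).hasDerivAt
  rw [deriv_fricke_of_eqOn hN hF h hz ((hG'.const_mul c).div (hasDerivAt_id z) hz₀)]
  field_simp

/-- Bol's identity: the second derivative of a form of weight `-1` is a form of weight `3`. -/
theorem deriv_deriv_fricke_of_weight_neg_one (hN : 0 < N) (hF : DifferentiableOn ℂ F UHP)
    (hG : DifferentiableOn ℂ G UHP) (h : ∀ z ∈ UHP, F (fricke N z) = c * G z / z) {z : ℂ}
    (hz : z ∈ UHP) : deriv (deriv F) (fricke N z) = N ^ 2 * c * z ^ 3 * deriv (deriv G) z := by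
  have hG' := (hG.differentiableAt (UHP_mem_nhds hz)).hasDerivAt
  have hG'' := ((hG.deriv isOpen_UHP).differentiableAt (UHP_mem_nhds hz)).hasDerivAt
  rw [deriv_fricke_of_eqOn hN (hF.deriv isOpen_UHP)
    (fun w hw => deriv_fricke_of_weight_neg_one hN hF hG h hw) hz
    ((((hasDerivAt_id z).mul hG'').sub hG').const_mul (N * c))]
  simp only [id_eq]
  ring

end Bol

namespace IsFrickePair

variable {N : ℝ} {σ ε : ℂ} {y u B : ℂ → ℂ}

theorem of_quasimodular (hN : 0 < N) {α : ℂ} (hσ : σ ^ 2 = 1) (hε : ε ^ 2 = 1)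
    (hy : DifferentiableOn ℂ y UHP) (hB : DifferentiableOn ℂ B UHP)
    (hy_add_one : ∀ z ∈ UHP, y (z + 1) = σ * y z) (hB_add_one : ∀ z ∈ UHP, B (z + 1) = σ * B z)
    (hy_fricke : ∀ z ∈ UHP, y (fricke N z) = ε * (y z + α * B z / z))
    (hB_fricke : ∀ z ∈ UHP, B (fricke N z) = ε * B z / (N * z ^ 2)) :
    IsFrickePair N σ ε y fun z => z * y z + α * B z where
  differentiableOn_left := hy
  differentiableOn_right := (differentiableOn_id.mul hy).add (hB.const_mul α)
  shift_sq := hσ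
  sign_sq := hε
  left_add_one := hy_add_one
  right_add_one z hz := by
    rw [hy_add_one z hz, hB_add_one z hz]
    ring
  left_fricke z hz := by
    have hz₀ := ne_zero_of_mem_UHP hz
    rw [hy_fricke z hz]
    field_simp
  right_fricke z hz := by
    have hz₀ := ne_zero_of_mem_UHP hz
    have hN₀ : (N : ℂ) ≠ 0 := ofReal_ne_zero.mpr hN.ne'
    rw [hy_fricke z hz, hB_fricke z hz, fricke]
    field_simp
    ring

theorem deriv_left_add_one (h : IsFrickePair N σ ε y u) {z : ℂ} (hz : z ∈ UHP) :
    deriv y (z + 1) = σ * deriv y z := by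
  rw [deriv_add_one_of_eqOn h.left_add_one hz, deriv_const_mul_field]

theorem deriv_right_add_one (h : IsFrickePair N σ ε y u) {z : ℂ} (hz : z ∈ UHP) :
    deriv u (z + 1) = σ * (deriv u z + deriv y z) := by
  rw [deriv_add_one_of_eqOn h.right_add_one hz, deriv_const_mul_field,
    deriv_fun_add (h.differentiableOn_right.differentiableAt (UHP_mem_nhds hz))
      (h.differentiableOn_left.differentiableAt (UHP_mem_nhds hz))]

theorem wronskian_add_one (h : IsFrickePair N σ ε y u) {z : ℂ} (hz : z ∈ UHP) :
    wronskian y u (z + 1) = wronskian y u z := by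
  simp only [wronskian, h.left_add_one z hz, h.right_add_one z hz, h.deriv_left_add_one hz,
    h.deriv_right_add_one hz]
  linear_combination (y z * deriv u z - deriv y z * u z) * h.shift_sq

theorem wronskian_deriv_add_one (h : IsFrickePair N σ ε y u) {z : ℂ} (hz : z ∈ UHP) :
    wronskian (deriv u) (deriv y) (z + 1) = wronskian (deriv u) (deriv y) z := by
  have hy'' : deriv (deriv y) (z + 1) = σ * deriv (deriv y) z := by
    rw [deriv_add_one_of_eqOn (fun w hw => h.deriv_left_add_one hw) hz, deriv_const_mul_field]
  have hu'' : deriv (deriv u) (z + 1) = σ * (deriv (deriv u) z + deriv (deriv y) z) := by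
    rw [deriv_add_one_of_eqOn (fun w hw => h.deriv_right_add_one hw) hz, deriv_const_mul_field,
      deriv_fun_add
        ((h.differentiableOn_right.deriv isOpen_UHP).differentiableAt (UHP_mem_nhds hz))
        ((h.differentiableOn_left.deriv isOpen_UHP).differentiableAt (UHP_mem_nhds hz))]
  simp only [wronskian, h.deriv_left_add_one hz, h.deriv_right_add_one hz, hy'', hu'']
  linear_combination
    (deriv u z * deriv (deriv y) z - deriv (deriv u) z * deriv y z) * h.shift_sq

theorem wronskian_fricke (hN : 0 < N) (h : IsFrickePair N σ ε y u) {z : ℂ} (hz : z ∈ UHP) :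
    wronskian y u (fricke N z) = wronskian y u z := by
  have hz₀ := ne_zero_of_mem_UHP hz
  have hN₀ : (N : ℂ) ≠ 0 := ofReal_ne_zero.mpr hN.ne'
  simp only [wronskian, h.left_fricke z hz, h.right_fricke z hz,
    deriv_fricke_of_weight_neg_one hN h.differentiableOn_left h.differentiableOn_right
      h.left_fricke hz,
    deriv_fricke_of_weight_neg_one hN h.differentiableOn_right h.differentiableOn_left
      h.right_fricke hz]
  field_simp
  linear_combination z * (y z * deriv u z - deriv y z * u z) * h.sign_sq

theorem wronskian_deriv_fricke (hN : 0 < N) (h : IsFrickePair N σ ε y u) {z : ℂ}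
    (hz : z ∈ UHP) (hW : deriv (wronskian y u) z = 0) :
    wronskian (deriv u) (deriv y) (fricke N z) =
      N ^ 2 * z ^ 4 * wronskian (deriv u) (deriv y) z := by
  have hz₀ := ne_zero_of_mem_UHP hz
  have hN₀ : (N : ℂ) ≠ 0 := ofReal_ne_zero.mpr hN.ne'
  have hy := h.differentiableOn_left
  have hu := h.differentiableOn_right
  rw [deriv_wronskian hy hu hz] at hW
  simp only [wronskian,
    deriv_fricke_of_weight_neg_one hN hy hu h.left_fricke hz,
    deriv_fricke_of_weight_neg_one hN hu hy h.right_fricke hz,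
    deriv_deriv_fricke_of_weight_neg_one hN hy hu h.left_fricke hz,
    deriv_deriv_fricke_of_weight_neg_one hN hu hy h.right_fricke hz]
  field_simp
  linear_combination ε ^ 2 * hW +
    z * (deriv u z * deriv (deriv y) z - deriv (deriv u) z * deriv y z) * h.sign_sq

theorem isHeckeForm_wronskian (hN : 0 < N) (h : IsFrickePair N σ ε y u) :
    IsHeckeForm N 0 (wronskian y u) where
  differentiableOn := differentiableOn_wronskian h.differentiableOn_left h.differentiableOn_right
  add_one _ hz := h.wronskian_add_one hz
  fricke _ hz := by rw [h.wronskian_fricke hN hz, pow_zero, one_mul]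

theorem exists_wronskian_ne_zero (h : IsFrickePair N σ ε y u) (hy_ne : ∀ᶠ z in I∞, y z ≠ 0) :
    ∃ z ∈ UHP, wronskian y u z ≠ 0 := by
  by_contra! hW
  obtain ⟨Y, hY⟩ := eventually_comap_im_iff.mp (hy_ne.and eventually_mem_UHP)
  set U : Set ℂ := {z | Y < z.im} with hU
  have hU_UHP : U ⊆ UHP := fun z hz => (hY z (le_of_lt hz)).2
  obtain ⟨c, hc⟩ := exists_eq_const_mul_of_wronskian_eq_zero
    (isOpen_lt continuous_const continuous_im) (convex_halfSpace_im_gt Y).isPreconnected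
    (h.differentiableOn_left.mono hU_UHP) (h.differentiableOn_right.mono hU_UHP)
    (fun z hz => (hY z (le_of_lt hz)).1) (fun z hz => hW z (hU_UHP hz))
  -- `z ↦ z + 1` sends `u` to `σ (u + y)`, which is incompatible with `u = c y`.
  set z : ℂ := (Y + 1) * I with hz
  have hzU : z ∈ U := by simp [hU, hz]
  have hz₁U : z + 1 ∈ U := by simp [hU, hz]
  have hright := h.right_add_one z (hU_UHP hzU)
  rw [hc _ hz₁U, hc _ hzU, h.left_add_one z (hU_UHP hzU)] at hright
  have hσ : σ ≠ 0 := by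
    rintro rfl
    simpa using h.shift_sq
  exact mul_ne_zero hσ (hY z (le_of_lt hzU)).1 (by linear_combination -hright)

theorem exists_potential (hN : 0 < N) (hN4 : N < 4) (h : IsFrickePair N σ ε y u)
    (hW : BoundedAtFilter I∞ (wronskian y u)) (hy_ne : ∀ᶠ z in I∞, y z ≠ 0) :
    ∃ φ, IsHeckeForm N 4 φ ∧ ∀ z ∈ UHP, deriv (deriv y) z = φ z * y z := by
  obtain ⟨W, hWeq⟩ := (h.isHeckeForm_wronskian hN).exists_eq_const_of_weight_zero hN hN4 hW
  have hW₀ : W ≠ 0 := by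
    obtain ⟨z, hz, hne⟩ := h.exists_wronskian_ne_zero hy_ne
    rwa [hWeq z hz] at hne
  have deriv_wronskian_eq_zero : ∀ z ∈ UHP, deriv (wronskian y u) z = 0 := fun z hz => by
    rw [(eventuallyEq_of_mem (UHP_mem_nhds hz) hWeq).deriv_eq, deriv_const]
  refine ⟨fun z => wronskian (deriv u) (deriv y) z / W, ⟨?_, fun z hz => ?_, fun z hz => ?_⟩,
    fun z hz => ?_⟩
  · exact (differentiableOn_wronskian (h.differentiableOn_right.deriv isOpen_UHP)
      (h.differentiableOn_left.deriv isOpen_UHP)).div_const W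
  · rw [h.wronskian_deriv_add_one hz]
  · have hsqrt : ((√N : ℝ) : ℂ) ^ 2 = N := by rw [← ofReal_pow, Real.sq_sqrt hN.le]
    rw [h.wronskian_deriv_fricke hN hz (deriv_wronskian_eq_zero z hz), ← hsqrt]
    ring
  · have hWz := hWeq z hz
    have hW'z := deriv_wronskian_eq_zero z hz
    rw [deriv_wronskian h.differentiableOn_left h.differentiableOn_right hz] at hW'z
    rw [wronskian] at hWz
    rw [div_mul_eq_mul_div, eq_div_iff hW₀, ← hWz, wronskian]
    linear_combination deriv y z * hW'z

end IsFrickePair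

/-! ### The eta product `P` -/

theorem differentiableOn_comp_three_mul {g : ℂ → ℂ} (hg : DifferentiableOn ℂ g UHP) :
    DifferentiableOn ℂ (fun z => g (3 * z)) UHP :=
  hg.comp (by fun_prop) fun _ => three_mul_mem_UHP

theorem comp_three_mul_add_one {g : ℂ → ℂ} (hg : ∀ z, g (z + 1) = g z) (z : ℂ) :
    g (3 * (z + 1)) = g (3 * z) := by
  rw [show 3 * (z + 1) = 3 * z + 1 + 1 + 1 by ring, hg, hg, hg]

theorem fricke_three (z : ℂ) : fricke 3 z = -1 / (3 * z) := by
  rw [fricke, ofReal_ofNat]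

theorem three_mul_fricke_three (z : ℂ) : 3 * fricke 3 z = -1 / z := by
  rw [fricke_three]
  field_simp

theorem ofReal_sqrt_three_sq : ((√3 : ℝ) : ℂ) ^ 2 = 3 := by
  rw [← ofReal_pow, Real.sq_sqrt zero_le_three, ofReal_ofNat]

theorem sqrt_three_mul_ne_zero {z : ℂ} (hz : z ∈ UHP) : ((√3 : ℝ) : ℂ) * z ≠ 0 :=
  mul_ne_zero (by simp) (ne_zero_of_mem_UHP hz)

/-- Euler's product `∏ (1 - qⁿ)` over `n ≥ 1`, which is `q ^ (-1 / 24) η(z)`. -/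
def eulerProd (z : ℂ) : ℂ := ∏' n : ℕ, (1 - qexp z ^ (n + 1))

theorem eta_eq_qParam_mul_eulerProd (z : ℂ) :
    ModularForm.eta z = Function.Periodic.qParam 24 z * eulerProd z := by
  simp [ModularForm.eta, eulerProd, qexp_eq_qParam, ModularForm.eta_q]

theorem eulerProd_ne_zero {z : ℂ} (hz : z ∈ UHP) : eulerProd z ≠ 0 := by
  simpa [eulerProd, qexp_eq_qParam, ModularForm.eta_q] using
    ModularForm.eta_tprod_ne_zero (z := z) hz

theorem differentiableOn_eulerProd : DifferentiableOn ℂ eulerProd UHP :=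
  ModularForm.differentiableOn_tprod_one_sub_pow.comp differentiable_qexp.differentiableOn
    fun _ hz => mem_ball_zero_iff.mpr (norm_qexp_lt_one hz)

theorem eulerProd_add_one (z : ℂ) : eulerProd (z + 1) = eulerProd z := by
  simp only [eulerProd, qexp_add_one]

theorem tendsto_eulerProd : Tendsto eulerProd I∞ (𝓝 1) := by
  have hcont := (ModularForm.differentiableOn_tprod_one_sub_pow.differentiableAt
    (Metric.ball_mem_nhds 0 one_pos)).continuousAt.tendsto
  simp only [ne_eq, Nat.add_eq_zero_iff, one_ne_zero, and_false, not_false_eq_true, zero_pow,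
    sub_zero, tprod_one] at hcont
  exact hcont.comp tendsto_qexp

theorem Pfun3_eq_exp_mul_eulerProd (k : ℕ) {z : ℂ} (hz : z ∈ UHP) :
    Pfun3 k z = exp (Real.pi * I * k * z) * (eulerProd z * eulerProd (3 * z)) ^ (3 * k) := by
  have multipliable := ModularForm.multipliable_one_sub_pow (norm_qexp_lt_one hz)
  have multipliable_three :=
    ModularForm.multipliable_one_sub_pow (norm_qexp_lt_one (three_mul_mem_UHP hz))
  simp only [Pfun3, pow_mul, ← qexp_three_mul]
  simp only [← pow_mul, eulerProd]
  rw [(multipliable.pow (3 * k)).tprod_mul (multipliable_three.pow (3 * k)),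
    multipliable.tprod_pow, multipliable_three.tprod_pow, mul_pow]

theorem Pfun3_eq_eta_mul_eta_pow (k : ℕ) {z : ℂ} (hz : z ∈ UHP) :
    Pfun3 k z = (ModularForm.eta z * ModularForm.eta (3 * z)) ^ (3 * k) := by
  rw [Pfun3_eq_exp_mul_eulerProd k hz, eta_eq_qParam_mul_eulerProd, eta_eq_qParam_mul_eulerProd,
    mul_mul_mul_comm, mul_pow (_ * _)]
  congr 1
  simp only [Function.Periodic.qParam, ← exp_add, ← exp_nat_mul]
  push_cast
  ring_nf

theorem Pfun3_ne_zero (k : ℕ) {z : ℂ} (hz : z ∈ UHP) : Pfun3 k z ≠ 0 := by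
  rw [Pfun3_eq_exp_mul_eulerProd k hz]
  exact mul_ne_zero (exp_ne_zero _)
    (pow_ne_zero _ (mul_ne_zero (eulerProd_ne_zero hz) (eulerProd_ne_zero (three_mul_mem_UHP hz))))

theorem differentiableOn_Pfun3 (k : ℕ) : DifferentiableOn ℂ (Pfun3 k) UHP :=
  (DifferentiableOn.mul (by fun_prop) ((differentiableOn_eulerProd.mul
    (differentiableOn_comp_three_mul differentiableOn_eulerProd)).pow _)).congr
      fun _ => Pfun3_eq_exp_mul_eulerProd k

theorem Pfun3_add_one (k : ℕ) {z : ℂ} (hz : z ∈ UHP) :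
    Pfun3 k (z + 1) = (-1) ^ k * Pfun3 k z := by
  rw [Pfun3_eq_exp_mul_eulerProd k hz, Pfun3_eq_exp_mul_eulerProd k (add_one_mem_UHP_iff.mpr hz),
    eulerProd_add_one, comp_three_mul_add_one eulerProd_add_one, ← mul_assoc,
    ← exp_pi_mul_I, ← exp_nat_mul, ← exp_add]
  ring_nf

theorem tendsto_exp_mul_Pfun3 (k : ℕ) :
    Tendsto (fun z => exp (-(Real.pi * I * k) * z) * Pfun3 k z) I∞ (𝓝 1) := by
  have hlim := (tendsto_eulerProd.mul (tendsto_eulerProd.comp tendsto_three_mul_comap_im)).pow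
    (3 * k)
  rw [one_mul, one_pow] at hlim
  refine hlim.congr' ?_
  filter_upwards [eventually_mem_UHP] with z hz
  rw [Pfun3_eq_exp_mul_eulerProd k hz, ← mul_assoc, ← exp_add, neg_mul, neg_add_cancel, exp_zero,
    one_mul, Function.comp_apply]

theorem csqrt_mul_self (z : ℂ) : Complex.sqrt z * Complex.sqrt z = z := by
  rcases eq_or_ne z 0 with rfl | hz
  · simp [Complex.sqrt]
  · rw [Complex.sqrt, ← cpow_add _ _ hz]
    norm_num

theorem csqrt_ofReal_mul {r : ℝ} (hr : 0 ≤ r) (z : ℂ) :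
    Complex.sqrt (r * z) = √r * Complex.sqrt z := by
  rcases hr.eq_or_lt with rfl | hr
  · simp
  rcases eq_or_ne z 0 with rfl | hz
  · simp
  have hr₀ : (r : ℂ) ≠ 0 := ofReal_ne_zero.mpr hr.ne'
  rw [Complex.sqrt, Complex.sqrt, cpow_def_of_ne_zero (mul_ne_zero hr₀ hz), log_ofReal_mul hr hz,
    add_mul, exp_add, ofReal_log hr.le, ← cpow_def_of_ne_zero hr₀, ← cpow_def_of_ne_zero hz,
    Real.sqrt_eq_rpow, ofReal_cpow hr.le]
  norm_num

theorem eta_neg_one_div {z : ℂ} (hz : z ∈ UHP) : ModularForm.eta (-1 / z) =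
    (Complex.sqrt I)⁻¹ * (Complex.sqrt z * ModularForm.eta z) := by
  simpa using ModularForm.eta_comp_eq_csqrt_I_inv hz

theorem eta_mul_eta_fricke {z : ℂ} (hz : z ∈ UHP) :
    ModularForm.eta (fricke 3 z) * ModularForm.eta (3 * fricke 3 z) =
      -I * (√3 * z) * (ModularForm.eta z * ModularForm.eta (3 * z)) := by
  have hI : (Complex.sqrt I)⁻¹ * (Complex.sqrt I)⁻¹ = -I := by
    rw [← mul_inv, csqrt_mul_self, inv_I]
  have hsqrt : Complex.sqrt (3 * z) = √3 * Complex.sqrt z := by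
    exact_mod_cast csqrt_ofReal_mul zero_le_three z
  rw [three_mul_fricke_three, fricke_three, eta_neg_one_div hz,
    eta_neg_one_div (three_mul_mem_UHP hz), hsqrt, ← hI]
  linear_combination (Complex.sqrt I)⁻¹ * (Complex.sqrt I)⁻¹ * √3 * ModularForm.eta z *
    ModularForm.eta (3 * z) * csqrt_mul_self z

theorem Pfun3_fricke (k : ℕ) {z : ℂ} (hz : z ∈ UHP) :
    Pfun3 k (fricke 3 z) = I ^ k * (√3 * z) ^ (3 * k) * Pfun3 k z := by
  rw [Pfun3_eq_eta_mul_eta_pow k hz, Pfun3_eq_eta_mul_eta_pow k (fricke_mem_UHP three_pos hz),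
    eta_mul_eta_fricke hz, mul_pow, mul_pow, pow_mul (-I), neg_pow, I_pow_three]
  norm_num

theorem isHeckeForm_Pfun3 (w : ℕ) : IsHeckeForm 3 (w * 12) (Pfun3 (4 * w)) where
  differentiableOn := differentiableOn_Pfun3 _
  add_one z hz := by rw [Pfun3_add_one _ hz, pow_mul]; norm_num
  fricke z hz := by rw [Pfun3_fricke _ hz, pow_mul, I_pow_four, one_pow, one_mul]; ring_nf

theorem tendsto_pow_div_Pfun3 {w : ℕ} (hw : w < 6) {h : ℂ → ℂ} (hh : h =O[I∞] qexp) :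
    Tendsto (fun z => h z ^ 12 / Pfun3 (4 * w) z) I∞ (𝓝 0) := by
  have hO : (fun z => h z ^ 12 * (qexp z ^ (2 * w))⁻¹) =O[I∞] fun z => qexp z ^ (12 - 2 * w) :=
    ((hh.pow 12).mul (Asymptotics.isBigO_refl _ _)).congr_right fun z => by
      rw [pow_sub₀ _ (qexp_ne_zero z) (by omega)]
  have hq_pow := tendsto_qexp.pow (12 - 2 * w)
  rw [zero_pow (by omega)] at hq_pow
  have hlim := (hO.trans_tendsto hq_pow).div (tendsto_exp_mul_Pfun3 (4 * w)) one_ne_zero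
  rw [zero_div] at hlim
  refine hlim.congr fun z => ?_
  have hexp : exp (-(Real.pi * I * (4 * w : ℕ)) * z) = (qexp z ^ (2 * w))⁻¹ := by
    rw [qexp, ← exp_nat_mul, ← exp_neg]
    push_cast
    ring_nf
  have hq : (qexp z ^ (2 * w))⁻¹ ≠ 0 := inv_ne_zero (pow_ne_zero _ (qexp_ne_zero z))
  rw [Pi.div_apply, hexp, mul_comm (h z ^ 12), mul_div_mul_left _ _ hq]

/-- `h ^ 12 / (η(z) η(3z)) ^ (12 w)` has weight zero, hence is constant, and it vanishes at `∞`
because its denominator vanishes there only to order `2 w < 12`. -/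
theorem IsHeckeForm.eq_zero_of_tendsto_zero {w : ℕ} (hw : w < 6) {h : ℂ → ℂ}
    (hh : IsHeckeForm 3 w h) (hlim : Tendsto h I∞ (𝓝 0)) : ∀ z ∈ UHP, h z = 0 := by
  have hquot := tendsto_pow_div_Pfun3 hw
    (isBigO_qexp_of_tendsto_zero hh.differentiableOn hh.add_one hlim)
  obtain ⟨c, hc⟩ := ((hh.pow 12).div three_pos (isHeckeForm_Pfun3 w)
    fun z => Pfun3_ne_zero (4 * w)).exists_eq_const_of_weight_zero three_pos (by norm_num)
      (hquot.isBigO_one ℝ)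
  have hc₀ : c = 0 := tendsto_nhds_unique
    (tendsto_const_nhds.congr' (eventually_mem_UHP.mono fun z hz => (hc z hz).symm)) hquot
  intro z hz
  simpa [hc₀, Pfun3_ne_zero (4 * w) hz] using hc z hz

/-! ### The Eisenstein series `M₄` and `M₂*` -/

theorem E4_eq_modularForm_E₄ (z : UpperHalfPlane) : E4 z = ModularForm.E₄ z := by
  rw [EisensteinSeries.q_expansion_bernoulli (by norm_num) (by decide)]
  simp_rw [zpow_natCast]
  rw [tsum_pnat_eq_tsum_succ (f := fun n : ℕ => ((ArithmeticFunction.sigma (4 - 1) n : ℕ) : ℂ) *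
    exp (2 * Real.pi * I * z) ^ n), bernoulli_eq_bernoulli'_of_ne_one (by norm_num),
    bernoulli'_four]
  simp only [E4, qexp]
  norm_num

theorem E2_eq_eisensteinSeries_E2 (z : UpperHalfPlane) : E2 z = EisensteinSeries.E2 z := by
  rw [EisensteinSeries.E2_eq_tsum_cexp, tsum_pnat_eq_tsum_succ (f := fun n : ℕ =>
    ((ArithmeticFunction.sigma 1 n : ℕ) : ℂ) * exp (2 * Real.pi * I * z) ^ n)]
  simp only [E2, qexp]

theorem differentiableOn_E4 : DifferentiableOn ℂ E4 UHP := by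
  refine (UpperHalfPlane.mdifferentiable_iff.mp ModularForm.E₄.holo').congr fun z hz => ?_
  lift z to UpperHalfPlane using hz
  rw [E4_eq_modularForm_E₄, Function.comp_apply, UpperHalfPlane.ofComplex_apply]
  rfl

theorem differentiableOn_E2 : DifferentiableOn ℂ E2 UHP := by
  refine (UpperHalfPlane.mdifferentiable_iff.mp E2_mdifferentiable).congr fun z hz => ?_
  lift z to UpperHalfPlane using hz
  rw [E2_eq_eisensteinSeries_E2, Function.comp_apply, UpperHalfPlane.ofComplex_apply]

theorem E4_add_one (z : ℂ) : E4 (z + 1) = E4 z := by simp only [E4, qexp_add_one]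

theorem E2_add_one (z : ℂ) : E2 (z + 1) = E2 z := by simp only [E2, qexp_add_one]

open scoped ModularForm in
theorem E4_neg_one_div {z : ℂ} (hz : z ∈ UHP) : E4 (-1 / z) = z ^ 4 * E4 z := by
  lift z to UpperHalfPlane using hz
  have hslash : (⇑ModularForm.E₄ ∣[(4 : ℤ)] ModularGroup.S) z = ModularForm.E₄ z :=
    congrFun (SlashInvariantForm.slash_action_eqn ModularForm.E₄ _
      (show Matrix.SpecialLinearGroup.mapGL ℝ ModularGroup.S ∈ _ from ⟨_, rfl⟩)) z
  simp only [ModularForm.SL_slash_def, UpperHalfPlane.modular_S_smul, ModularGroup.denom_S,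
    ← E4_eq_modularForm_E₄, _root_.zpow_neg, zpow_ofNat] at hslash
  rw [← div_eq_mul_inv, div_eq_iff (pow_ne_zero 4 z.ne_zero)] at hslash
  rw [neg_div, one_div, ← inv_neg, mul_comm, ← hslash]

theorem E2_neg_one_div {z : ℂ} (hz : z ∈ UHP) :
    E2 (-1 / z) = z ^ 2 * E2 z + 6 * z / (Real.pi * I) := by
  lift z to UpperHalfPlane using hz
  have hslash := congrFun (EisensteinSeries.E2_slash_action ModularGroup.S) z
  simp only [one_div, ModularForm.SL_slash_def, UpperHalfPlane.modular_S_smul,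
    ModularGroup.denom_S, Int.reduceNeg, _root_.zpow_neg, riemannZeta_two, _root_.mul_inv_rev,
    Pi.sub_apply, Pi.smul_apply, EisensteinSeries.D2_S, smul_eq_mul, zpow_ofNat,
    ← E2_eq_eisensteinSeries_E2] at hslash
  have hz₀ := z.ne_zero
  have hπ : (Real.pi : ℂ) ≠ 0 := ofReal_ne_zero.mpr Real.pi_ne_zero
  rw [← div_eq_mul_inv, div_eq_iff (pow_ne_zero 2 hz₀)] at hslash
  rw [neg_div, one_div, ← inv_neg]
  refine hslash.trans ?_
  field_simp
  linear_combination (-6 : ℂ) * I_sq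

theorem tendsto_tsum_mul_qexp_pow {a : ℕ → ℂ} {r : ℝ} (hr : 0 < r)
    (ha : Summable fun n => ‖a n‖ * r ^ (n + 1)) :
    Tendsto (fun z => ∑' n : ℕ, a n * qexp z ^ (n + 1)) I∞ (𝓝 0) := by
  have hterm (n : ℕ) : Tendsto (fun z => a n * qexp z ^ (n + 1)) I∞ (𝓝 0) := by
    simpa using (tendsto_qexp.pow (n + 1)).const_mul (a n)
  have hq : ∀ᶠ z in I∞, ‖qexp z‖ < r :=
    tendsto_qexp.norm.eventually_lt_const (by rwa [norm_zero])
  have hbound : ∀ᶠ z in I∞, ∀ n : ℕ, ‖a n * qexp z ^ (n + 1)‖ ≤ ‖a n‖ * r ^ (n + 1) := by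
    filter_upwards [hq] with z hz n
    rw [norm_mul, norm_pow]
    gcongr
  simpa using tendsto_tsum_of_dominated_convergence ha hterm hbound

theorem tendsto_E4 : Tendsto E4 I∞ (𝓝 1) := by
  have hsum : Summable fun n : ℕ =>
      ‖(ArithmeticFunction.sigma 3 (n + 1) : ℂ)‖ * (1 / 2 : ℝ) ^ (n + 1) := by
    refine .of_nonneg_of_le (fun n => by positivity) (fun n => ?_) ((summable_nat_add_iff 1).mpr
      (summable_pow_mul_geometric_of_norm_lt_one 4 (r := (1 / 2 : ℝ)) (by norm_num)))
    rw [norm_natCast]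
    gcongr
    exact_mod_cast ArithmeticFunction.sigma_le_pow_succ 3 (n + 1)
  have h := ((tendsto_tsum_mul_qexp_pow one_half_pos hsum).const_mul 240).const_add 1
  rwa [mul_zero, add_zero] at h

theorem isHeckeForm_M4plus3 : IsHeckeForm 3 4 M4plus3 where
  differentiableOn := (((differentiableOn_comp_three_mul differentiableOn_E4).const_mul 9).add
    differentiableOn_E4).div_const 10
  add_one z _ := by rw [M4plus3, comp_three_mul_add_one E4_add_one, E4_add_one, M4plus3]
  fricke z hz := by
    rw [M4plus3, three_mul_fricke_three, fricke_three, E4_neg_one_div hz,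
      E4_neg_one_div (three_mul_mem_UHP hz), M4plus3]
    linear_combination (-z ^ 4 * (9 * E4 (3 * z) + E4 z) / 10) * (((√3 : ℝ) : ℂ) ^ 2 + 3) *
      ofReal_sqrt_three_sq

theorem tendsto_M4plus3 : Tendsto M4plus3 I∞ (𝓝 1) := by
  have h := (((tendsto_E4.comp tendsto_three_mul_comap_im).const_mul 9).add tendsto_E4).div_const 10
  rwa [show (9 * 1 + 1) / 10 = (1 : ℂ) by norm_num] at h

theorem differentiableOn_M2star3 : DifferentiableOn ℂ M2star3 UHP :=
  (((differentiableOn_comp_three_mul differentiableOn_E2).const_mul 3).add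
    differentiableOn_E2).div_const 4

theorem M2star3_add_one (z : ℂ) : M2star3 (z + 1) = M2star3 z := by
  rw [M2star3, comp_three_mul_add_one E2_add_one, E2_add_one, M2star3]

theorem M2star3_fricke {z : ℂ} (hz : z ∈ UHP) :
    M2star3 (fricke 3 z) = 3 * z ^ 2 * (M2star3 z + 3 / (Real.pi * I) / z) := by
  have hz₀ := ne_zero_of_mem_UHP hz
  have hπ : (Real.pi : ℂ) ≠ 0 := ofReal_ne_zero.mpr Real.pi_ne_zero
  rw [M2star3, three_mul_fricke_three, fricke_three, E2_neg_one_div hz,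
    E2_neg_one_div (three_mul_mem_UHP hz), M2star3]
  field_simp [I_ne_zero]
  ring

/-! ### Modular forms on `Γ₀⁺(3)` -/

theorem toR_T_mem_GammaPlus3 : toR ModularGroup.T ∈ GammaPlus3 := by
  refine Subgroup.subset_closure (Or.inl (Subgroup.mem_map_of_mem _ ?_))
  rw [CongruenceSubgroup.Gamma0_mem]
  simp [ModularGroup.T]

theorem S3elt_mem_GammaPlus3 : S3elt ∈ GammaPlus3 := Subgroup.subset_closure (Or.inr rfl)

theorem coe_toR_T : (toR ModularGroup.T).1 = !![1, 1; 0, 1] := by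
  rw [toR, Matrix.SpecialLinearGroup.map_apply_coe, RingHom.mapMatrix_apply, ModularGroup.coe_T]
  ext i j
  fin_cases i <;> fin_cases j <;> simp

theorem R3elt_eq_toR_T_mul_S3elt : R3elt = toR ModularGroup.T * S3elt := by
  refine Subtype.ext ?_
  rw [Matrix.SpecialLinearGroup.coe_mul, coe_toR_T]
  simp [R3elt, S3elt]

theorem moeb_toR_T (z : ℂ) : moeb (toR ModularGroup.T) z = z + 1 := by
  simp [moeb, coe_toR_T]

theorem jfac_toR_T (z : ℂ) : jfac (toR ModularGroup.T) z = 1 := by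
  simp [jfac, coe_toR_T]

theorem moeb_S3elt (z : ℂ) : moeb S3elt z = fricke 3 z := by
  have hmoeb : moeb S3elt z = -(√3 : ℂ)⁻¹ / (√3 * z) := by simp [moeb, S3elt]
  rw [hmoeb, fricke_three, ← ofReal_sqrt_three_sq]
  field_simp

theorem jfac_S3elt (z : ℂ) : jfac S3elt z = √3 * z := by
  simp [jfac, S3elt]

theorem map_toR_T_eq_one {χ : SL2R → ℂ}
    (hχ : ∀ γ ∈ GammaPlus3, ∀ δ ∈ GammaPlus3, χ (γ * δ) = χ γ * χ δ)
    (hSR : χ S3elt = χ R3elt) (hS : χ S3elt ≠ 0) : χ (toR ModularGroup.T) = 1 := by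
  have hTS := hχ _ toR_T_mem_GammaPlus3 _ S3elt_mem_GammaPlus3
  rw [← R3elt_eq_toR_T_mul_S3elt, ← hSR] at hTS
  exact (mul_eq_right₀ hS).mp hTS.symm

namespace MFchar

variable {χ : SL2R → ℂ} {w : ℤ} {g : ℂ → ℂ}

theorem boundedAtFilter {Γ : Subgroup SL2R} (hg : MFchar Γ χ w g) : BoundedAtFilter I∞ g := by
  obtain ⟨C, hC⟩ := hg.2.2
  refine .of_bound C (eventually_comap_im_iff.mpr ⟨1, fun z hz => ?_⟩)
  simpa using hC z (one_pos.trans_le hz) hz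

theorem apply_add_one (hg : MFchar GammaPlus3 χ w g) (hT : χ (toR ModularGroup.T) = 1) {z : ℂ}
    (hz : z ∈ UHP) : g (z + 1) = g z := by
  simpa [moeb_toR_T, jfac_toR_T, hT] using hg.2.1 _ toR_T_mem_GammaPlus3 z hz

theorem apply_fricke (hg : MFchar GammaPlus3 χ w g) {z : ℂ} (hz : z ∈ UHP) :
    g (fricke 3 z) = χ S3elt * (√3 * z) ^ w * g z := by
  simpa [moeb_S3elt, jfac_S3elt] using hg.2.1 _ S3elt_mem_GammaPlus3 z hz

end MFchar

theorem VOrder.exists_tendsto {N ν : ℝ} {g : ℂ → ℂ} (hg : VOrder N g ν) :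
    ∃ c ≠ 0, Tendsto (fun z => exp (-(2 * Real.pi * I * ν * z / N)) * g z) I∞ (𝓝 c) := by
  obtain ⟨c, hc, hlim⟩ := hg
  refine ⟨c, hc, Metric.tendsto_nhds.mpr fun ε hε => eventually_comap_im_iff.mpr ?_⟩
  simpa only [dist_eq_norm] using hlim ε hε

/-! ### Extremal quasimodular forms -/

theorem IsFrickePair.deriv_deriv_eq_mul_M4plus3 {σ ε a c : ℂ} {y u : ℂ → ℂ}
    (h : IsFrickePair 3 σ ε y u) (hW : BoundedAtFilter I∞ (wronskian y u)) (hc : c ≠ 0)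
    (hlim : Tendsto (fun z => exp (a * z) * y z) I∞ (𝓝 c)) :
    ∀ z ∈ UHP, deriv (deriv y) z = a ^ 2 * M4plus3 z * y z := by
  have hy_ne : ∀ᶠ z in I∞, y z ≠ 0 :=
    (hlim.eventually_ne hc).mono fun z => right_ne_zero_of_mul
  obtain ⟨φ, hφ, hφ_eq⟩ := h.exists_potential three_pos (by norm_num) hW hy_ne
  have hφ_lim : Tendsto (fun z => φ z - a ^ 2 * M4plus3 z) I∞ (𝓝 0) := by
    have hsub := (tendsto_potential h.differentiableOn_left hc hlim hφ_eq).sub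
      (tendsto_M4plus3.const_mul (a ^ 2))
    rwa [mul_one, sub_self] at hsub
  have hφ_eq_M4 := (hφ.sub_const_mul isHeckeForm_M4plus3 (a ^ 2)).eq_zero_of_tendsto_zero
    (by norm_num) hφ_lim
  intro z hz
  rw [hφ_eq z hz, sub_eq_zero.mp (hφ_eq_M4 z hz)]

theorem boundedAtFilter_exp_pi_mul (k : ℕ) :
    BoundedAtFilter I∞ fun z => exp (Real.pi * I * k * z) := by
  refine .of_bound 1 (eventually_mem_UHP.mono fun z hz => ?_)
  have him : 0 < z.im := hz
  have hre : (Real.pi * I * k * z : ℂ).re = -(Real.pi * k * z.im) := by simp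
  rw [norm_exp, hre, Pi.one_apply, norm_one, mul_one, Real.exp_le_one_iff, neg_nonpos]
  positivity

theorem tendsto_exp_mul_div_Pfun3 {k : ℕ} {c : ℂ} {g : ℂ → ℂ}
    (hg : Tendsto (fun z => exp (-(2 * Real.pi * I * k * z)) * g z) I∞ (𝓝 c)) :
    Tendsto (fun z => exp (-(Real.pi * I * k) * z) * (g z / Pfun3 k z)) I∞ (𝓝 c) := by
  have h := hg.div (tendsto_exp_mul_Pfun3 k) one_ne_zero
  rw [div_one] at h
  refine h.congr fun z => ?_
  rw [Pi.div_apply, show -(2 * Real.pi * I * k * z) =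
    -(Real.pi * I * k) * z + -(Real.pi * I * k) * z by ring, exp_add, mul_assoc,
    mul_div_mul_left _ _ (exp_ne_zero _), mul_div_assoc]

theorem boundedAtFilter_exp_mul_div_Pfun3 (k : ℕ) {g : ℂ → ℂ} (hg : BoundedAtFilter I∞ g) :
    BoundedAtFilter I∞ fun z => exp (Real.pi * I * k * z) * (g z / Pfun3 k z) := by
  have hinv : BoundedAtFilter I∞ fun z => (exp (-(Real.pi * I * k) * z) * Pfun3 k z)⁻¹ :=
    ((tendsto_exp_mul_Pfun3 k).inv₀ one_ne_zero).isBigO_one ℝ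
  refine (hg.mul hinv).congr_left fun z => ?_
  rw [Pi.mul_apply, mul_inv, neg_mul, exp_neg, inv_inv]
  ring

theorem div_Pfun3_add_one (k : ℕ) {g : ℂ → ℂ} {z : ℂ} (hz : z ∈ UHP) (hg : g (z + 1) = g z) :
    g (z + 1) / Pfun3 k (z + 1) = (-1) ^ k * (g z / Pfun3 k z) := by
  rw [hg, Pfun3_add_one k hz]
  rcases neg_one_pow_eq_or ℂ k with hk | hk <;> simp [hk, div_neg]

section Quasimodular

variable {χ : SL2R → ℂ} {k : ℕ} {f₀ f₁ : ℂ → ℂ}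

theorem MFchar.div_Pfun3_fricke (hS : χ S3elt = (-I) ^ k) {n : ℕ} {g : ℂ → ℂ}
    (hg : MFchar GammaPlus3 χ (3 * k - n) g) {z : ℂ} (hz : z ∈ UHP) :
    g (fricke 3 z) / Pfun3 k (fricke 3 z) = (-1) ^ k * (g z / Pfun3 k z) / (√3 * z) ^ n := by
  have hsz := sqrt_three_mul_ne_zero hz
  have hpow : (√3 * z : ℂ) ^ (3 * k - n : ℤ) = (√3 * z) ^ (3 * k) / (√3 * z) ^ n := by
    rw [zpow_sub₀ hsz]
    norm_cast
  rw [hg.apply_fricke hz, hS, hpow, Pfun3_fricke k hz, neg_pow I]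
  have hP := Pfun3_ne_zero k hz
  have hI : I ^ k ≠ 0 := pow_ne_zero k I_ne_zero
  have hJ := pow_ne_zero (3 * k) hsz
  have hJn := pow_ne_zero n hsz
  generalize (√3 * z : ℂ) ^ (3 * k) = J at *
  generalize (√3 * z : ℂ) ^ n = Jn at *
  field_simp

theorem isFrickePair_quasimodular_div_Pfun3 (hT : χ (toR ModularGroup.T) = 1)
    (hS : χ S3elt = (-I) ^ k) (hf₀ : MFchar GammaPlus3 χ (3 * k) f₀)
    (hf₁ : MFchar GammaPlus3 χ (3 * k - 2) f₁) :
    IsFrickePair 3 ((-1) ^ k) ((-1) ^ k) (fun z => (f₀ z + M2star3 z * f₁ z) / Pfun3 k z)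
      fun z => z * ((f₀ z + M2star3 z * f₁ z) / Pfun3 k z) +
        3 / (Real.pi * I) * (f₁ z / Pfun3 k z) := by
  have sign_sq : ((-1 : ℂ) ^ k) ^ 2 = 1 := by rw [← pow_mul, mul_comm, pow_mul]; simp
  have hf₀_fricke {z : ℂ} (hz : z ∈ UHP) := MFchar.div_Pfun3_fricke hS (n := 0) (by simpa) hz
  have hf₁_fricke {z : ℂ} (hz : z ∈ UHP) := MFchar.div_Pfun3_fricke hS (n := 2) (by simpa) hz
  refine .of_quasimodular three_pos sign_sq sign_sq
    ((hf₀.1.add (differentiableOn_M2star3.mul hf₁.1)).div (differentiableOn_Pfun3 k)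
      fun z => Pfun3_ne_zero k)
    (hf₁.1.div (differentiableOn_Pfun3 k) fun z => Pfun3_ne_zero k)
    (fun z hz => ?_) (fun z hz => div_Pfun3_add_one k hz (hf₁.apply_add_one hT hz))
    (fun z hz => ?_) fun z hz => ?_
  · refine div_Pfun3_add_one k (g := fun w => f₀ w + M2star3 w * f₁ w) hz ?_
    rw [hf₀.apply_add_one hT hz, hf₁.apply_add_one hT hz, M2star3_add_one]
  · have hz₀ := ne_zero_of_mem_UHP hz
    rw [add_div, mul_div_assoc, hf₀_fricke hz, hf₁_fricke hz, M2star3_fricke hz, pow_zero,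
      mul_pow, ofReal_sqrt_three_sq]
    field_simp
    ring
  · rw [hf₁_fricke hz, mul_pow, ofReal_sqrt_three_sq, ofReal_ofNat]

end Quasimodular

/-- Theorem: an extremal quasimodular form of weight `3k` and depth 1
on `Γ₀⁺(3)` with character `χ^k`, divided by `M₆^{k/2}`, solves
`y″ = -4π²(k/2)² M₄ y`. -/
theorem extremal_Gamma0plus3_weight3k_MODE
    (χ : SL2R → ℂ)
    (hχmul : ∀ γ ∈ GammaPlus3, ∀ δ ∈ GammaPlus3, χ (γ * δ) = χ γ * χ δ)
    (hχS : χ S3elt = -Complex.I) (hχR : χ R3elt = -Complex.I)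
    (k : ℕ)
    (f₀ f₁ : ℂ → ℂ)
    (hf₀ : MFchar GammaPlus3 (fun γ => χ γ ^ k) (3 * k) f₀)
    (hf₁ : MFchar GammaPlus3 (fun γ => χ γ ^ k) (3 * k - 2) f₁)
    (f : ℂ → ℂ) (hf : ∀ z, f z = f₀ z + M2star3 z * f₁ z)
    (hext : VOrder 1 f (k : ℝ)) :
    ∀ z ∈ UHP,
      deriv (deriv fun w => f w / Pfun3 k w) z
        = -(4 * (Real.pi : ℂ) ^ 2) * ((k : ℂ) / 2) ^ 2 * M4plus3 z * (f z / Pfun3 k z) := by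
  have hT : χ (toR ModularGroup.T) = 1 :=
    map_toR_T_eq_one hχmul (hχS.trans hχR.symm) (by simp [hχS])
  have hpair := isFrickePair_quasimodular_div_Pfun3 (by rw [hT, one_pow]) (by rw [hχS]) hf₀ hf₁
  simp only [← hf] at hpair
  have hB : DifferentiableOn ℂ (fun z => f₁ z / Pfun3 k z) UHP :=
    hf₁.1.div (differentiableOn_Pfun3 k) fun z => Pfun3_ne_zero k
  obtain ⟨c, hc, hlim⟩ := hext.exists_tendsto
  have hy_lim := tendsto_exp_mul_div_Pfun3 (k := k) (by simpa using hlim)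
  have hW := boundedAtFilter_wronskian_id_mul_add_const_mul (3 / (Real.pi * I))
    hpair.differentiableOn_left hB
    (by simpa using boundedAtFilter_exp_pi_mul k) (hy_lim.isBigO_one ℝ)
    (by simpa using boundedAtFilter_exp_mul_div_Pfun3 k hf₁.boundedAtFilter)
  intro z hz
  rw [hpair.deriv_deriv_eq_mul_M4plus3 hW hc hy_lim z hz]
  linear_combination Real.pi ^ 2 * k ^ 2 * M4plus3 z * (f z / Pfun3 k z) * I_sq
end
end

section
/- Let ℓ be an odd integer, let ŷ₂: ℍ → ℂ be holomorphic, and define ŷ₁(z) := z^{−ℓ} ŷ₂(−1/z). Suppose that ŷ₂(z+1) = ŷ₂(z) for all z ∈ ℍ, that there is a constant d ∈ ℂ with ŷ₁(z+1) = ŷ₁(z) + d·ŷ₂(z) for all z ∈ ℍ, and that ŷ₁ and ŷ₂ are linearly independent over ℂ. Then d = 1. -/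
noncomputable section

open Complex Matrix Filter Topology

/-!
In weight `ℓ` the matrix `-I = S² = (TS)³` acts by the scalar `ε = (-1)^ℓ`. On the span of
`ŷ₁ = ŷ₂|S` and `ŷ₂`, the first relation gives `ŷ₁|S = ε ŷ₂`, after which `ŷ₂|(TS)³` evaluates to
`(ε + d²) ŷ₁ + d ε ŷ₂`. The second relation says that this is `ε ŷ₂`, so linear independence forces
`d ε = ε` and `ε + d² = 0`, that is, `d = 1` and `ε = -1`.
-/

section LinearAlgebra

variable {R M : Type*} [CommRing R] [AddCommGroup M] [Module R M]
  {S T : Module.End R M} {ε d : R} {v : M}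

theorem mul_pow_three_apply_of_unipotent (hSS : S (S v) = ε • v) (hTv : T v = v)
    (hTSv : T (S v) = S v + d • v) :
    ((S * T) ^ 3) v = (ε + d ^ 2) • S v + (d * ε) • v := by
  have hv : (S * T) v = S v := by rw [Module.End.mul_apply, hTv]
  have hSv : (S * T) (S v) = ε • v + d • S v := by
    rw [Module.End.mul_apply, hTSv, map_add, map_smul, hSS]
  rw [pow_succ, pow_two, Module.End.mul_apply, Module.End.mul_apply, hv, hSv, map_add, map_smul,
    map_smul, hv, hSv]
  module

theorem eq_one_and_eq_neg_one_of_unipotent (hε : IsUnit ε)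
    (hindep : LinearIndependent R ![S v, v]) (hSS : S (S v) = ε • v)
    (hST : ((S * T) ^ 3) v = ε • v) (hTv : T v = v) (hTSv : T (S v) = S v + d • v) :
    d = 1 ∧ ε = -1 := by
  have hcomb : (ε + d ^ 2) • S v + (d * ε - ε) • v = 0 := by
    rw [sub_smul, ← add_sub_assoc, ← mul_pow_three_apply_of_unipotent hSS hTv hTSv, hST, sub_self]
  obtain ⟨hSv_coeff, hv_coeff⟩ := LinearIndependent.pair_iff.mp hindep _ _ hcomb
  have hd : d = 1 := hε.mul_right_cancel (by rw [sub_eq_zero.mp hv_coeff, one_mul])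
  refine ⟨hd, ?_⟩
  rwa [hd, one_pow, ← eq_neg_iff_add_eq_zero] at hSv_coeff

end LinearAlgebra

section Slash

open UpperHalfPlane
open ModularGroup (S T)
open scoped MatrixGroups ModularForm

variable {k : ℤ}

theorem modularGroup_S_mul_self : S * S = -1 := by
  decide

theorem modularGroup_T_mul_S_pow_three : (T * S) ^ 3 = -1 := by
  decide

theorem denom_neg_SL (γ : SL(2, ℤ)) (τ : ℍ) :
    denom ((-γ : SL(2, ℤ)) : GL (Fin 2) ℝ) τ = -denom γ τ := by
  rw [ModularGroup.denom_apply, ModularGroup.denom_apply, SpecialLinearGroup.coe_neg,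
    Matrix.neg_apply, Matrix.neg_apply]
  push_cast
  ring

theorem slash_neg_SL (γ : SL(2, ℤ)) (f : ℍ → ℂ) : f ∣[k] (-γ) = (-1 : ℂ) ^ k • f ∣[k] γ := by
  ext τ
  have hsign : (-1 : ℂ) ^ (-k) = (-1) ^ k := by rw [_root_.zpow_neg, ← _root_.inv_zpow, inv_neg_one]
  rw [Pi.smul_apply, smul_eq_mul, ModularForm.SL_slash_apply, ModularForm.SL_slash_apply,
    ModularGroup.SL_neg_smul, denom_neg_SL, neg_eq_neg_one_mul, mul_zpow, hsign, mul_left_comm]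

/-- The weight-`k` slash operator `f ↦ f ∣[k] γ` of `γ ∈ SL(2,ℤ)`, as an endomorphism of the space
of all functions `ℍ → ℂ`. The slash action is a right action, so `γ * δ` corresponds to the
composite `slashEnd k δ * slashEnd k γ`. -/
def slashEnd (k : ℤ) (γ : SL(2, ℤ)) : Module.End ℂ (ℍ → ℂ) where
  toFun f := f ∣[k] γ
  map_add' := SlashAction.add_slash k γ
  map_smul' c f := ModularForm.SL_smul_slash k γ f c

@[simp]
theorem slashEnd_apply (γ : SL(2, ℤ)) (f : ℍ → ℂ) : slashEnd k γ f = f ∣[k] γ :=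
  rfl

theorem slashEnd_mul (γ δ : SL(2, ℤ)) : slashEnd k (γ * δ) = slashEnd k δ * slashEnd k γ :=
  LinearMap.ext (SlashAction.slash_mul k γ δ)

theorem slashEnd_pow (γ : SL(2, ℤ)) (n : ℕ) : slashEnd k (γ ^ n) = slashEnd k γ ^ n := by
  induction n with
  | zero =>
    ext1 f
    rw [pow_zero, pow_zero, slashEnd_apply, SlashAction.slash_one, Module.End.one_apply]
  | succ n ih => rw [pow_succ, slashEnd_mul, ih, pow_succ']

theorem odd_weight_and_eq_one_of_slash_unipotent {d : ℂ} {f : ℍ → ℂ} (hT : f ∣[k] T = f)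
    (hST : (f ∣[k] S) ∣[k] T = f ∣[k] S + d • f)
    (hindep : LinearIndependent ℂ ![f ∣[k] S, f]) :
    Odd k ∧ d = 1 := by
  have hneg : f ∣[k] (-1 : SL(2, ℤ)) = (-1 : ℂ) ^ k • f := by
    rw [slash_neg_SL, SlashAction.slash_one]
  have hSS : slashEnd k S (slashEnd k S f) = (-1 : ℂ) ^ k • f := by
    rw [← Module.End.mul_apply, ← slashEnd_mul, modularGroup_S_mul_self, slashEnd_apply, hneg]
  have hcube : ((slashEnd k S * slashEnd k T) ^ 3) f = (-1 : ℂ) ^ k • f := by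
    rw [← slashEnd_mul, ← slashEnd_pow, modularGroup_T_mul_S_pow_three, slashEnd_apply, hneg]
  have hunit : IsUnit ((-1 : ℂ) ^ k) := (zpow_ne_zero k (neg_ne_zero.mpr one_ne_zero)).isUnit
  obtain ⟨hd, hsign⟩ := eq_one_and_eq_neg_one_of_unipotent hunit
    (S := slashEnd k S) (T := slashEnd k T) hindep hSS hcube hT hST
  refine ⟨Int.not_even_iff_odd.mp fun hk ↦ ?_, hd⟩
  norm_num [hk.neg_one_zpow] at hsign

theorem comp_coe_slash_S_apply (y : ℂ → ℂ) (τ : ℍ) :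
    ((y ∘ (↑) : ℍ → ℂ) ∣[k] S) τ = (τ : ℂ) ^ (-k) * y (-1 / τ) := by
  rw [SlashInvariantForm.slash_S_apply, mul_comm, neg_div, one_div, ← inv_neg]
  rfl

theorem comp_coe_slash_T_apply (y : ℂ → ℂ) (τ : ℍ) :
    ((y ∘ (↑) : ℍ → ℂ) ∣[k] T) τ = y (τ + 1) := by
  have hdenom : denom T τ = 1 := by
    rw [ModularGroup.denom_apply]
    simp [ModularGroup.T]
  rw [ModularForm.SL_slash_apply, modular_T_smul, hdenom, _root_.one_zpow, mul_one,
    Function.comp_apply, coe_vadd, ofReal_one, add_comm]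

theorem monodromy_constant_SL2Z_general
    (ℓ : ℤ) (yhat₂ yhat₁ : ℂ → ℂ)
    (hy₁ : ∀ z ∈ UHP, yhat₁ z = z ^ (-ℓ) * yhat₂ (-1 / z))
    (hper₂ : ∀ z ∈ UHP, yhat₂ (z + 1) = yhat₂ z)
    (d : ℂ) (hper₁ : ∀ z ∈ UHP, yhat₁ (z + 1) = yhat₁ z + d * yhat₂ z)
    (hindep : ∀ a b : ℂ, (∀ z ∈ UHP, a * yhat₁ z + b * yhat₂ z = 0) → a = 0 ∧ b = 0) :
    Odd ℓ ∧ d = 1 := by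
  let f₁ : ℍ → ℂ := yhat₁ ∘ (↑)
  let f₂ : ℍ → ℂ := yhat₂ ∘ (↑)
  have hslash_S : f₂ ∣[ℓ] S = f₁ := funext fun τ ↦
    (comp_coe_slash_S_apply yhat₂ τ).trans (hy₁ τ τ.im_pos).symm
  have hslash_T : f₂ ∣[ℓ] T = f₂ := funext fun τ ↦
    (comp_coe_slash_T_apply yhat₂ τ).trans (hper₂ τ τ.im_pos)
  have hslash_ST : f₁ ∣[ℓ] T = f₁ + d • f₂ := funext fun τ ↦
    (comp_coe_slash_T_apply yhat₁ τ).trans (hper₁ τ τ.im_pos)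
  have hindep_slash : LinearIndependent ℂ ![f₁, f₂] :=
    LinearIndependent.pair_iff.mpr fun a b hab ↦ hindep a b fun z hz ↦ congrFun hab ⟨z, hz⟩
  rw [← hslash_S] at hslash_ST hindep_slash
  exact odd_weight_and_eq_one_of_slash_unipotent hslash_T hslash_ST hindep_slash

end Slash

/-- Lemma: normalization of the monodromy constant for `SL(2,ℤ)`.
If `ℓ` is odd, `ŷ₂` is holomorphic on `ℍ` and 1-periodic, `ŷ₁(z) = z^{-ℓ} ŷ₂(-1/z)`
satisfies `ŷ₁(z+1) = ŷ₁(z) + d·ŷ₂(z)`, and `ŷ₁, ŷ₂` are linearly independent over `ℂ`,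
then `d = 1`. -/
theorem monodromy_constant_SL2Z
    (ℓ : ℤ) (hℓ : Odd ℓ)
    (yhat₂ : ℂ → ℂ) (hholo : DifferentiableOn ℂ yhat₂ UHP)
    (yhat₁ : ℂ → ℂ) (hy₁ : ∀ z ∈ UHP, yhat₁ z = z ^ (-ℓ) * yhat₂ (-1 / z))
    (hper₂ : ∀ z ∈ UHP, yhat₂ (z + 1) = yhat₂ z)
    (d : ℂ) (hper₁ : ∀ z ∈ UHP, yhat₁ (z + 1) = yhat₁ z + d * yhat₂ z)
    (hindep : ∀ a b : ℂ, (∀ z ∈ UHP, a * yhat₁ z + b * yhat₂ z = 0) → a = 0 ∧ b = 0) :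
    d = 1 := by
  exact (monodromy_constant_SL2Z_general ℓ yhat₂ yhat₁ hy₁ hper₂ d hper₁ hindep).2
end
end

section
/- Let Γ be a subgroup of SL(2,ℝ) commensurable with SL(2,ℤ) and containing −I, and let Q be a meromorphic function on ℍ, not identically 0, with Q((az+b)/(cz+d)) = (cz+d)⁴ Q(z) for all (a b; c d) ∈ Γ. Let z₀ ∈ ℍ be an elliptic point of Γ whose stabilizer {γ ∈ Γ : γz₀ = z₀} has order 2e with e ≥ 2. Suppose that (z−z₀)² Q(z) has a finite limit A as z → z₀ (so Q has a pole of order at most 2 at z₀), and that A = (1/4 − κ²)/(4π²) for some κ ∈ (1/2)ℤ, κ > 0, such that e does not divide 2κ; thus the local exponents of the equation y″ = −4π² Q y at z₀ are 1/2 ± κ. Then z₀ is an apparent singularity of y″ = −4π² Q y: choosing r > 0 so small that Q has no poles in the punctured disk D* = {0 < |z−z₀| < r} ⊆ ℍ, for every holomorphic solution y of y″ = −4π² Q y on any simply connected open subset U of D*, there exists a meromorphic function on the full disk {|z−z₀| < r} that agrees with y² on U. -/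
noncomputable section

open Complex Matrix Filter Topology

/-- `-I ∈ SL(2,ℝ)`. -/
def negI : SL2R := ⟨-1, by simp [Matrix.det_fin_two_of, Matrix.det_neg]⟩


/-!
Put the elliptic point at `0` and let `n = 2κ₀`, where `1 / 2 ± κ₀` are the exponents. The equation
becomes `x² y″ = V y` with `V` holomorphic. For the larger exponent a Frobenius series always
exists; for the smaller one the recursion meets a single obstruction, a coefficient `a` in degree
`n`, and `a` does not depend on the series chosen. An element of the stabilizer acts as
`τ x = ω x / (1 + κ x)`, and pulling the equation back along `τ` turns the series with obstruction
`a` into one with obstruction `ω ^ n * a`. As the order `2e` of the stabilizer does not divide `2n`,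
some element has `ω ^ n ≠ 1`, whence `a = 0`. Every solution is then a combination of
`x ^ ((1 + n) / 2) h₁` and `x ^ ((1 - n) / 2) h₂` with `h₁`, `h₂` holomorphic, and only integral
powers of `x` occur in its square.
-/

/-! ### Power series on a disc -/

/-- The power series `∑ c k * x ^ k` converges to `f x` for every `x` in the open disc of radius `r`
about `0`. This is the scalar, real-radius form of `HasFPowerSeriesOnBall`, adapted to manipulating
coefficients by recurrences. -/
def HasPowerSumOnBall (c : ℕ → ℂ) (f : ℂ → ℂ) (r : ℝ) : Prop :=
  ∀ x ∈ Metric.ball (0 : ℂ) r, HasSum (fun k => c k * x ^ k) (f x)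

lemma exists_hasPowerSumOnBall {f : ℂ → ℂ} {r : ℝ}
    (hf : DifferentiableOn ℂ f (Metric.ball 0 r)) :
    ∃ c, c 0 = f 0 ∧ HasPowerSumOnBall c f r := by
  refine ⟨fun k => (k.factorial : ℂ)⁻¹ * iteratedDeriv k f 0, by simp, fun x hx => ?_⟩
  refine (hasSum_taylorSeries_on_ball hf hx).congr_fun fun k => ?_
  simp only [sub_zero, smul_eq_mul]
  ring

namespace HasPowerSumOnBall

variable {c d : ℕ → ℂ} {f g : ℂ → ℂ} {r : ℝ}

lemma of_bound (hc : ∀ ρ, 0 < ρ → ρ < r → ∃ C : ℝ, ∀ k, ‖c k‖ * ρ ^ k ≤ C) :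
    HasPowerSumOnBall c (fun x => ∑' k, c k * x ^ k) r := by
  intro x hx
  obtain ⟨ρ, hxρ, hρr⟩ := exists_between (mem_ball_zero_iff.mp hx)
  have hρ : 0 < ρ := (norm_nonneg x).trans_lt hxρ
  obtain ⟨C, hC⟩ := hc ρ hρ hρr
  have hgeom : Summable fun k : ℕ => C * (‖x‖ / ρ) ^ k :=
    (summable_geometric_of_lt_one (by positivity) ((div_lt_one hρ).2 hxρ)).mul_left C
  refine (Summable.of_norm_bounded hgeom fun k => ?_).hasSum
  calc ‖c k * x ^ k‖ = ‖c k‖ * ρ ^ k * (‖x‖ / ρ) ^ k := by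
        rw [norm_mul, norm_pow, div_pow]
        field_simp
    _ ≤ C * (‖x‖ / ρ) ^ k := by
        gcongr
        exact hC k

lemma summable_norm_mul_pow (h : HasPowerSumOnBall c f r) {s : ℝ} (hs0 : 0 ≤ s) (hsr : s < r) :
    Summable fun k => ‖c k‖ * s ^ k := by
  have hs : (s : ℂ) ∈ Metric.ball 0 r := by simpa [abs_of_nonneg hs0] using hsr
  simpa [abs_of_nonneg hs0] using (h s hs).summable.norm

lemma exists_norm_mul_pow_le (h : HasPowerSumOnBall c f r) {s : ℝ} (hs0 : 0 ≤ s) (hsr : s < r) :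
    ∃ C, ∀ k, ‖c k‖ * s ^ k ≤ C := by
  obtain ⟨C, hC⟩ := (h.summable_norm_mul_pow hs0 hsr).tendsto_atTop_zero.bddAbove_range
  exact ⟨C, fun k => hC ⟨k, rfl⟩⟩

lemma hasDerivAt (h : HasPowerSumOnBall c f r) {x : ℂ} (hx : x ∈ Metric.ball 0 r) :
    ∃ f', HasDerivAt f f' x ∧ HasSum (fun k => k * c k * x ^ k) (x * f') := by
  obtain ⟨s, hxs, hsr⟩ := exists_between (mem_ball_zero_iff.mp hx)
  have hxs' : x ∈ Metric.ball 0 s := mem_ball_zero_iff.mpr hxs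
  have hsum := h.summable_norm_mul_pow ((norm_nonneg x).trans hxs.le) hsr
  have hdiff (k : ℕ) : DifferentiableOn ℂ (fun w : ℂ => c k * w ^ k) (Metric.ball 0 s) := by
    fun_prop
  have hle (k : ℕ) (w : ℂ) (hw : w ∈ Metric.ball 0 s) : ‖c k * w ^ k‖ ≤ ‖c k‖ * s ^ k := by
    rw [norm_mul, norm_pow]
    gcongr
    exact (mem_ball_zero_iff.mp hw).le
  have hf : f =ᶠ[𝓝 x] fun w => ∑' k, c k * w ^ k := by
    filter_upwards [Metric.isOpen_ball.mem_nhds hx] with w hw using (h w hw).tsum_eq.symm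
  have htsum := (differentiableOn_tsum_of_summable_norm hsum hdiff Metric.isOpen_ball
    hle).differentiableAt (Metric.isOpen_ball.mem_nhds hxs')
  have hsum' := hasSum_deriv_of_summable_norm hsum hdiff Metric.isOpen_ball hle hxs'
  refine ⟨_, htsum.hasDerivAt.congr_of_eventuallyEq hf, (hsum'.mul_left x).congr_fun fun k => ?_⟩
  rw [deriv_const_mul _ (by fun_prop), deriv_pow_field]
  rcases k with _ | k
  · simp
  · simp only [Nat.add_sub_cancel]
    ring

lemma differentiableOn (h : HasPowerSumOnBall c f r) : DifferentiableOn ℂ f (Metric.ball 0 r) :=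
  fun _ hx => (h.hasDerivAt hx).choose_spec.1.differentiableAt.differentiableWithinAt

lemma mul_deriv (h : HasPowerSumOnBall c f r) :
    HasPowerSumOnBall (fun k => k * c k) (fun x => x * deriv f x) r := by
  intro x hx
  obtain ⟨f', hf', hsum⟩ := h.hasDerivAt hx
  simpa only [hf'.deriv] using hsum

lemma mul (hf : HasPowerSumOnBall c f r) (hg : HasPowerSumOnBall d g r) :
    HasPowerSumOnBall (fun k => ∑ i ∈ Finset.range (k + 1), c i * d (k - i))
      (fun x => f x * g x) r := by
  intro x hx
  have hcauchy := hasSum_sum_range_mul_of_summable_norm (hf x hx).summable.norm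
    (hg x hx).summable.norm
  rw [(hf x hx).tsum_eq, (hg x hx).tsum_eq] at hcauchy
  refine hcauchy.congr_fun fun k => ?_
  rw [Finset.sum_mul]
  refine Finset.sum_congr rfl fun i hi => ?_
  rw [← pow_sub_mul_pow x (Finset.mem_range_succ_iff.mp hi)]
  ring

end HasPowerSumOnBall

/-! ### Frobenius series -/

/-- The operator `h ↦ x ^ (2 - ρ) (x ^ ρ h)″ - x ^ (-ρ) V (x ^ ρ h)` with `ρ = (1 + m) / 2`, written
without fractional powers: `x ^ ρ h` solves `x² y″ = V y` exactly when `frobeniusOp m V h = 0`. When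
`V 0 = (m² - 1) / 4`, the exponents of that equation at `0` are `(1 ± m) / 2`. -/
def frobeniusOp (m : ℂ) (V h : ℂ → ℂ) (x : ℂ) : ℂ :=
  x ^ 2 * deriv (deriv h) x + (1 + m) * x * deriv h x + ((m ^ 2 - 1) / 4 - V x) * h x

/-- The coefficients of the Frobenius series `h` for the exponent `(1 + m) / 2`, where `b` is the
coefficient sequence of `V`. At a positive `k` with `k + m = 0` (a resonance) the quotient is a
division by zero, so that the coefficient is `0` there. -/
def frobeniusCoeff (m : ℂ) (b : ℕ → ℂ) : ℕ → ℂ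
  | 0 => 1
  | k + 1 => (∑ i : Fin (k + 1), b (k + 1 - i) * frobeniusCoeff m b i) / ((k + 1) * (k + 1 + m))

lemma frobeniusCoeff_eq_div (m : ℂ) (b : ℕ → ℂ) {k : ℕ} (hk : k ≠ 0) :
    frobeniusCoeff m b k =
      (∑ i ∈ Finset.range k, b (k - i) * frobeniusCoeff m b i) / (k * (k + m)) := by
  obtain ⟨k, rfl⟩ := Nat.exists_eq_succ_of_ne_zero hk
  rw [frobeniusCoeff, Finset.sum_range]
  push_cast
  rfl

lemma exists_forall_le_of_eventually_step {u : ℕ → ℝ} (K : ℕ)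
    (hstep : ∀ k ≥ K, ∀ C, (∀ i < k, u i ≤ C) → u k ≤ C) : ∃ C, ∀ k, u k ≤ C := by
  obtain ⟨C, hC⟩ := ((Set.finite_Iio K).image u).bddAbove
  refine ⟨C, fun k => ?_⟩
  induction k using Nat.strong_induction_on with
  | _ k ih =>
    rcases lt_or_ge k K with hk | hk
    · exact hC (Set.mem_image_of_mem u hk)
    · exact hstep k hk C ih

lemma norm_sum_range_mul_mul_pow_le {b c : ℕ → ℂ} {ρ M C : ℝ} {k : ℕ} (hρ : 0 ≤ ρ)
    (hb : ∀ i, ‖b i‖ * ρ ^ i ≤ M) (hc : ∀ i < k, ‖c i‖ * ρ ^ i ≤ C) :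
    ‖∑ i ∈ Finset.range k, b (k - i) * c i‖ * ρ ^ k ≤ k * (M * C) := by
  calc ‖∑ i ∈ Finset.range k, b (k - i) * c i‖ * ρ ^ k
      ≤ (∑ i ∈ Finset.range k, ‖b (k - i) * c i‖) * ρ ^ k := by
        gcongr
        exact norm_sum_le _ _
    _ = ∑ i ∈ Finset.range k, (‖b (k - i)‖ * ρ ^ (k - i)) * (‖c i‖ * ρ ^ i) := by
        rw [Finset.sum_mul]
        refine Finset.sum_congr rfl fun i hi => ?_
        rw [norm_mul, ← pow_sub_mul_pow ρ (Finset.mem_range.mp hi).le]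
        ring
    _ ≤ ∑ _i ∈ Finset.range k, M * C := by
        refine Finset.sum_le_sum fun i hi => ?_
        have hM : 0 ≤ M := le_trans (by positivity) (hb 0)
        exact mul_le_mul (hb _) (hc i (Finset.mem_range.mp hi)) (by positivity) hM
    _ = k * (M * C) := by simp

lemma exists_norm_frobeniusCoeff_mul_pow_le (m : ℂ) {b : ℕ → ℂ} {ρ M : ℝ} (hρ : 0 ≤ ρ)
    (hb : ∀ i, ‖b i‖ * ρ ^ i ≤ M) : ∃ C, ∀ k, ‖frobeniusCoeff m b k‖ * ρ ^ k ≤ C := by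
  obtain ⟨K, hK⟩ := exists_nat_gt (M + ‖m‖)
  have hM : 0 ≤ M := le_trans (by positivity) (hb 0)
  refine exists_forall_le_of_eventually_step K fun k hk C hC => ?_
  have hkK : M + ‖m‖ < k := hK.trans_le (by exact_mod_cast hk)
  have hk0 : 0 < (k : ℝ) := lt_of_le_of_lt (by positivity) hkK
  have hk0' : k ≠ 0 := by exact_mod_cast hk0.ne'
  have hden : M < ‖(k : ℂ) + m‖ := by
    have htri := norm_sub_le ((k : ℂ) + m) m
    rw [add_sub_cancel_right, Complex.norm_natCast] at htri
    linarith
  have hC0 : 0 ≤ C := le_trans (by positivity) (hC 0 (Nat.pos_of_ne_zero hk0'))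
  rw [frobeniusCoeff_eq_div m b hk0', norm_div, norm_mul, Complex.norm_natCast, div_mul_eq_mul_div,
    div_le_iff₀ (mul_pos hk0 (hM.trans_lt hden))]
  calc _ ≤ k * (M * C) := norm_sum_range_mul_mul_pow_le hρ hb hC
    _ ≤ k * (‖(k : ℂ) + m‖ * C) := by gcongr
    _ = C * (k * ‖(k : ℂ) + m‖) := by ring

lemma hasPowerSumOnBall_frobeniusOp {m : ℂ} {V h : ℂ → ℂ} {b c : ℕ → ℂ} {r : ℝ}
    (hV : HasPowerSumOnBall b V r) (hb0 : b 0 = (m ^ 2 - 1) / 4) (hh : HasPowerSumOnBall c h r) :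
    HasPowerSumOnBall (fun k => k * (k + m) * c k - ∑ i ∈ Finset.range k, b (k - i) * c i)
      (frobeniusOp m V h) r := by
  intro x hx
  have hnhds := Metric.isOpen_ball.mem_nhds hx
  have hh' : HasDerivAt (deriv h) (deriv (deriv h) x) x :=
    ((hh.differentiableOn.deriv Metric.isOpen_ball).differentiableAt hnhds).hasDerivAt
  have hθθ : x * deriv (fun y => y * deriv h y) x = x * deriv h x + x ^ 2 * deriv (deriv h) x := by
    rw [((hasDerivAt_id' x).fun_mul hh').deriv]
    ring
  have hsum := (((hh.mul_deriv.mul_deriv x hx).add ((hh.mul_deriv x hx).mul_left m)).add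
    ((hh x hx).mul_left ((m ^ 2 - 1) / 4))).sub (hh.mul hV x hx)
  have hop : frobeniusOp m V h x = x * deriv (fun y => y * deriv h y) x + m * (x * deriv h x) +
      (m ^ 2 - 1) / 4 * h x - h x * V x := by
    rw [frobeniusOp, hθθ]
    ring
  rw [hop]
  refine hsum.congr_fun fun k => ?_
  simp only [Finset.sum_range_succ, Nat.sub_self, hb0, mul_comm (c _)]
  ring

lemma exists_frobeniusOp_hasPowerSumOnBall {m : ℂ} {V : ℂ → ℂ} {r : ℝ}
    (hV : DifferentiableOn ℂ V (Metric.ball 0 r)) (hV0 : V 0 = (m ^ 2 - 1) / 4) :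
    ∃ h a, DifferentiableOn ℂ h (Metric.ball 0 r) ∧ h 0 = 1 ∧
      (∀ k : ℕ, k = 0 ∨ (k : ℂ) + m ≠ 0 → a k = 0) ∧
      HasPowerSumOnBall a (frobeniusOp m V h) r := by
  obtain ⟨b, hb0, hb⟩ := exists_hasPowerSumOnBall hV
  have hc : HasPowerSumOnBall (frobeniusCoeff m b)
      (fun x => ∑' k, frobeniusCoeff m b k * x ^ k) r :=
    .of_bound fun ρ hρ0 hρr =>
      have ⟨_, hM⟩ := hb.exists_norm_mul_pow_le hρ0.le hρr
      exists_norm_frobeniusCoeff_mul_pow_le m hρ0.le hM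
  refine ⟨_, _, hc.differentiableOn, ?_, fun k hk => ?_,
    hasPowerSumOnBall_frobeniusOp hb (hb0.trans hV0) hc⟩
  · rw [tsum_eq_single 0 fun k hk => by simp [hk]]
    simp [frobeniusCoeff]
  · rcases eq_or_ne k 0 with rfl | hk0
    · simp
    · have hkm : (k : ℂ) * (k + m) ≠ 0 :=
        mul_ne_zero (Nat.cast_ne_zero.mpr hk0) (hk.resolve_left hk0)
      rw [frobeniusCoeff_eq_div m b hk0, mul_div_cancel₀ _ hkm, sub_self]

lemma exists_frobeniusOp_natCast_eq_zero (n : ℕ) {V : ℂ → ℂ} {r : ℝ}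
    (hV : DifferentiableOn ℂ V (Metric.ball 0 r)) (hV0 : V 0 = ((n : ℂ) ^ 2 - 1) / 4) :
    ∃ h, DifferentiableOn ℂ h (Metric.ball 0 r) ∧ h 0 = 1 ∧
      ∀ x ∈ Metric.ball 0 r, frobeniusOp n V h x = 0 := by
  obtain ⟨h, a, hh, h0, ha, hsum⟩ := exists_frobeniusOp_hasPowerSumOnBall hV hV0
  refine ⟨h, hh, h0, fun x hx => (hsum x hx).unique (hasSum_zero.congr_fun fun k => ?_)⟩
  have hk : k = 0 ∨ (k : ℂ) + n ≠ 0 := by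
    rcases eq_or_ne k 0 with hk | hk
    · exact .inl hk
    · exact .inr (by exact_mod_cast (Nat.add_pos_left (Nat.pos_of_ne_zero hk) n).ne')
  rw [ha k hk, zero_mul]

lemma exists_frobeniusOp_neg_natCast_eq (n : ℕ) {V : ℂ → ℂ} {r : ℝ}
    (hV : DifferentiableOn ℂ V (Metric.ball 0 r)) (hV0 : V 0 = ((n : ℂ) ^ 2 - 1) / 4) :
    ∃ h, ∃ a : ℂ, DifferentiableOn ℂ h (Metric.ball 0 r) ∧ h 0 = 1 ∧
      ∀ x ∈ Metric.ball 0 r, frobeniusOp (-n) V h x = a * x ^ n := by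
  obtain ⟨h, a, hh, h0, ha, hsum⟩ :=
    exists_frobeniusOp_hasPowerSumOnBall (m := -n) hV (by rw [hV0, neg_sq])
  refine ⟨h, a n, hh, h0, fun x hx => (hsum x hx).unique (hasSum_single n fun k hkn => ?_)⟩
  have hk : (k : ℂ) + -n ≠ 0 := by
    rw [← sub_eq_add_neg, sub_ne_zero]
    exact_mod_cast hkn
  rw [ha k (.inr hk), zero_mul]

section frobeniusOp

variable {m : ℂ} {V h : ℂ → ℂ} {x : ℂ}

lemma frobeniusOp_eq_of_hasDerivAt {h' : ℂ → ℂ} {h'' : ℂ}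
    (hh : ∀ᶠ y in 𝓝 x, HasDerivAt h (h' y) y) (hh' : HasDerivAt h' h'' x) :
    frobeniusOp m V h x =
      x ^ 2 * h'' + (1 + m) * x * h' x + ((m ^ 2 - 1) / 4 - V x) * h x := by
  have hderiv : deriv h =ᶠ[𝓝 x] h' := hh.mono fun y hy => hy.deriv
  rw [frobeniusOp, hderiv.deriv_eq, hh'.deriv, hderiv.self_of_nhds]

lemma frobeniusOp_congr {g : ℂ → ℂ} (hgh : g =ᶠ[𝓝 x] h) :
    frobeniusOp m V g x = frobeniusOp m V h x := by
  rw [frobeniusOp, frobeniusOp, hgh.deriv.deriv_eq, hgh.deriv_eq, hgh.self_of_nhds]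

lemma eventually_hasDerivAt_of_analyticAt (hh : AnalyticAt ℂ h x) :
    ∀ᶠ y in 𝓝 x, HasDerivAt h (deriv h y) y :=
  hh.eventually_analyticAt.mono fun _ hy => hy.differentiableAt.hasDerivAt

lemma frobeniusOp_sub {g : ℂ → ℂ} (hg : AnalyticAt ℂ g x) (hh : AnalyticAt ℂ h x) :
    frobeniusOp m V (fun y => g y - h y) x = frobeniusOp m V g x - frobeniusOp m V h x := by
  rw [frobeniusOp_eq_of_hasDerivAt (h' := fun y => deriv g y - deriv h y) ?_
    (hg.deriv.differentiableAt.hasDerivAt.fun_sub hh.deriv.differentiableAt.hasDerivAt),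
    frobeniusOp, frobeniusOp]
  · ring
  · filter_upwards [eventually_hasDerivAt_of_analyticAt hg, eventually_hasDerivAt_of_analyticAt hh]
      with y hgy hhy using hgy.fun_sub hhy

lemma frobeniusOp_pow_mul (hh : AnalyticAt ℂ h x) (k : ℕ) :
    frobeniusOp m V (fun y => y ^ k * h y) x =
      x ^ k * (k * (k + m) * h x + 2 * k * x * deriv h x + frobeniusOp m V h x) := by
  have hd := (((hasDerivAt_pow (k - 1) x).const_mul (k : ℂ)).fun_mul
    hh.differentiableAt.hasDerivAt).fun_add
      ((hasDerivAt_pow k x).fun_mul hh.deriv.differentiableAt.hasDerivAt)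
  rw [frobeniusOp_eq_of_hasDerivAt
    (h' := fun y => k * y ^ (k - 1) * h y + y ^ k * deriv h y) ?_ hd, frobeniusOp]
  · rcases k with _ | _ | k <;> simp <;> ring
  · filter_upwards [eventually_hasDerivAt_of_analyticAt hh] with y hy
    exact (hasDerivAt_pow k y).fun_mul hy

end frobeniusOp

/-! ### The resonance obstruction -/

lemma eq_zero_pow_mul_of_pow_mul_eq {f g : ℂ → ℂ} {k j : ℕ} (hf : ContinuousAt f 0)
    (hg : ContinuousAt g 0) (hfg : ∀ᶠ x in 𝓝 (0 : ℂ), x ^ k * f x = x ^ (k + j) * g x) :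
    f 0 = 0 ^ j * g 0 := by
  have hne : f =ᶠ[𝓝[≠] 0] fun x => x ^ j * g x := by
    filter_upwards [nhdsWithin_le_nhds hfg, self_mem_nhdsWithin] with x hx hx0
    rw [pow_add, mul_assoc] at hx
    exact mul_left_cancel₀ (pow_ne_zero k hx0) hx
  exact ((hf.eventuallyEq_nhds_iff_eventuallyEq_nhdsNE (by fun_prop)).mp hne).self_of_nhds

-- The value at `0` says that on `x ^ k * f` the operator acts to leading order as multiplication
-- by the indicial polynomial `k * (k + m)`.
lemma exists_frobeniusOp_pow_mul_eventuallyEq {m : ℂ} {V f : ℂ → ℂ} (hV : ContinuousAt V 0)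
    (hV0 : V 0 = (m ^ 2 - 1) / 4) (hf : AnalyticAt ℂ f 0) (k : ℕ) :
    ∃ E : ℂ → ℂ, ContinuousAt E 0 ∧ E 0 = k * (k + m) * f 0 ∧
      ∀ᶠ x in 𝓝 0, frobeniusOp m V (fun y => y ^ k * f y) x = x ^ k * E x := by
  refine ⟨fun x => k * (k + m) * f x + 2 * k * x * deriv f x + frobeniusOp m V f x, ?_, ?_,
    hf.eventually_analyticAt.mono fun x hx => frobeniusOp_pow_mul hx k⟩
  · have := hf.continuousAt
    have := hf.deriv.continuousAt
    have := hf.deriv.deriv.continuousAt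
    unfold frobeniusOp
    fun_prop
  · simp only [frobeniusOp, hV0]
    ring

-- The indicial polynomial `k * (k - n)` has no zero `k ≠ 0` other than `n`, so the operator never
-- produces a term of degree exactly `n` from a function vanishing at `0`.
lemma eq_zero_of_frobeniusOp_neg_natCast_eq_pow_mul {n : ℕ} {V d S : ℂ → ℂ}
    (hV : ContinuousAt V 0) (hV0 : V 0 = ((n : ℂ) ^ 2 - 1) / 4) (hd : AnalyticAt ℂ d 0)
    (hd0 : d 0 = 0) (hS : ContinuousAt S 0)
    (hdS : ∀ᶠ x in 𝓝 (0 : ℂ), frobeniusOp (-n) V d x = x ^ n * S x) : S 0 = 0 := by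
  by_cases hzero : ∀ᶠ x in 𝓝 (0 : ℂ), d x = 0
  · have hS0 : ∀ᶠ x in 𝓝 (0 : ℂ), x ^ n * S x = x ^ (n + 0) * 0 := by
      filter_upwards [hzero.eventually_nhds, hdS] with x hx hxS
      rw [← hxS, frobeniusOp_congr (h := fun _ => 0) hx]
      simp [frobeniusOp]
    simpa using eq_zero_pow_mul_of_pow_mul_eq hS continuousAt_const hS0
  obtain ⟨k, f, hf, hf0, hdf⟩ := hd.exists_eventuallyEq_pow_smul_nonzero_iff.mpr hzero
  simp only [sub_zero, smul_eq_mul] at hdf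
  have hk0 : k ≠ 0 := by
    rintro rfl
    exact hf0 (by simpa [hd0] using hdf.self_of_nhds.symm)
  obtain ⟨E, hE, hE0, hEk⟩ :=
    exists_frobeniusOp_pow_mul_eventuallyEq (m := -n) hV (by rw [hV0, neg_sq]) hf k
  have hkn : ∀ᶠ x in 𝓝 (0 : ℂ), x ^ k * E x = x ^ n * S x := by
    filter_upwards [hdS, hdf.eventually_nhds, hEk] with x hxS hxd hxE
    rw [← hxS, frobeniusOp_congr hxd, hxE]
  rcases lt_or_ge k n with hlt | hge
  · obtain ⟨j, rfl⟩ := Nat.exists_eq_add_of_lt hlt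
    have hE0' := eq_zero_pow_mul_of_pow_mul_eq (j := j + 1) hE hS hkn
    rw [hE0, zero_pow j.succ_ne_zero, zero_mul, ← sub_eq_add_neg] at hE0'
    have hne : (k : ℂ) - (k + j + 1 : ℕ) ≠ 0 := sub_ne_zero.mpr (by exact_mod_cast hlt.ne)
    exact absurd hE0' (mul_ne_zero (mul_ne_zero (Nat.cast_ne_zero.mpr hk0) hne) hf0)
  · obtain ⟨j, rfl⟩ := Nat.exists_eq_add_of_le hge
    rw [eq_zero_pow_mul_of_pow_mul_eq hS hE (hkn.mono fun x hx => hx.symm), hE0]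
    rcases eq_or_ne j 0 with rfl | hj <;> simp [*]

/-! ### Invariance under a Möbius transformation fixing the singular point -/

section Moebius

variable {κ ω x : ℂ}

lemma hasDerivAt_one_add_mul : HasDerivAt (fun y => 1 + κ * y) κ x := by
  simpa using ((hasDerivAt_id' x).const_mul κ).const_add 1

lemma hasDerivAt_mul_div_one_add_mul (hx : 1 + κ * x ≠ 0) :
    HasDerivAt (fun y => ω * y / (1 + κ * y)) (ω / (1 + κ * x) ^ 2) x := by
  refine (((hasDerivAt_id' x).const_mul ω).fun_div hasDerivAt_one_add_mul hx).congr_deriv ?_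
  congr 1
  ring

lemma hasDerivAt_one_add_mul_cpow (s : ℂ) (hx : 1 + κ * x ∈ slitPlane) :
    HasDerivAt (fun y => (1 + κ * y) ^ s) (s * κ * (1 + κ * x) ^ s / (1 + κ * x)) x := by
  refine (hasDerivAt_one_add_mul.cpow_const hx).congr_deriv ?_
  rw [cpow_sub _ _ (slitPlane_ne_zero hx), cpow_one]
  ring

-- For the transformation `τ`, the factor `(1 + κ * y) ^ ((1 - m) / 2)` is, up to a constant,
-- `(τ y / y) ^ ((1 + m) / 2) * deriv τ y ^ (-1 / 2)`; the second part of it keeps the transformed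
-- equation free of a first-order term.
lemma frobeniusOp_moebius {m : ℂ} {V h : ℂ → ℂ} (hx : 1 + κ * x ∈ slitPlane)
    (hh : AnalyticAt ℂ h (ω * x / (1 + κ * x)))
    (hV : V (ω * x / (1 + κ * x)) = (1 + κ * x) ^ 2 * V x) :
    frobeniusOp m V (fun y => (1 + κ * y) ^ ((1 - m) / 2) * h (ω * y / (1 + κ * y))) x =
      (1 + κ * x) ^ ((1 - m) / 2) / (1 + κ * x) ^ 2 *
        frobeniusOp m V h (ω * x / (1 + κ * x)) := by
  have hx0 : 1 + κ * x ≠ 0 := slitPlane_ne_zero hx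
  have hτ : HasDerivAt (fun y => ω * y / (1 + κ * y)) _ x := hasDerivAt_mul_div_one_add_mul hx0
  have hv := hasDerivAt_one_add_mul_cpow ((1 - m) / 2) hx
  have hslit : ∀ᶠ y in 𝓝 x, 1 + κ * y ∈ slitPlane :=
    hasDerivAt_one_add_mul.continuousAt.eventually_mem (isOpen_slitPlane.mem_nhds hx)
  have hfirst : ∀ᶠ y in 𝓝 x,
      HasDerivAt (fun y => (1 + κ * y) ^ ((1 - m) / 2) * h (ω * y / (1 + κ * y)))
        ((1 - m) / 2 * κ * (1 + κ * y) ^ ((1 - m) / 2) / (1 + κ * y) * h (ω * y / (1 + κ * y)) +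
          (1 + κ * y) ^ ((1 - m) / 2) * (deriv h (ω * y / (1 + κ * y)) * (ω / (1 + κ * y) ^ 2)))
        y := by
    filter_upwards [hslit, hτ.continuousAt.eventually hh.eventually_analyticAt] with y hy hhy
    exact (hasDerivAt_one_add_mul_cpow _ hy).fun_mul (hhy.differentiableAt.hasDerivAt.comp y
      (hasDerivAt_mul_div_one_add_mul (slitPlane_ne_zero hy)))
  have hsecond := (((hv.const_mul ((1 - m) / 2 * κ)).fun_div hasDerivAt_one_add_mul hx0).fun_mul
    (hh.differentiableAt.hasDerivAt.comp x hτ)).fun_add (hv.fun_mul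
      ((hh.deriv.differentiableAt.hasDerivAt.comp x hτ).fun_mul ((hasDerivAt_const x ω).fun_div
        (hasDerivAt_one_add_mul.fun_pow 2) (pow_ne_zero 2 hx0))))
  rw [frobeniusOp_eq_of_hasDerivAt hfirst hsecond, frobeniusOp, hV]
  simp only [Function.comp, Nat.cast_ofNat, Nat.add_one_sub_one, pow_one]
  generalize deriv (deriv h) _ = h₂, deriv h _ = h₁, h _ = h₀, (1 + κ * x) ^ ((1 - m) / 2) = v
  obtain ⟨J, hJ⟩ : ∃ J, J = 1 + κ * x := ⟨_, rfl⟩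
  rw [← hJ] at hx0 ⊢
  field_simp
  rw [hJ]
  ring

lemma eq_zero_of_frobeniusOp_neg_natCast_eq_mul_pow {n : ℕ} {V h : ℂ → ℂ} {a : ℂ}
    (hV : ContinuousAt V 0) (hV0 : V 0 = ((n : ℂ) ^ 2 - 1) / 4)
    (hVτ : ∀ᶠ x in 𝓝 (0 : ℂ), V (ω * x / (1 + κ * x)) = (1 + κ * x) ^ 2 * V x) (hω : ω ^ n ≠ 1)
    (hh : AnalyticAt ℂ h 0) (ha : ∀ᶠ x in 𝓝 (0 : ℂ), frobeniusOp (-n) V h x = a * x ^ n) :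
    a = 0 := by
  set τ : ℂ → ℂ := fun x => ω * x / (1 + κ * x) with hτ
  set v : ℂ → ℂ := fun x => (1 + κ * x) ^ ((1 - -n : ℂ) / 2) with hv
  have hτ0 : τ 0 = 0 := by simp [hτ]
  have hv0 : v 0 = 1 := by simp [hv]
  have hτan : AnalyticAt ℂ τ 0 := by
    apply AnalyticAt.fun_div <;> first | fun_prop | simp
  have hvan : AnalyticAt ℂ v 0 := by
    apply AnalyticAt.cpow <;> first | fun_prop | simp
  have hgan : AnalyticAt ℂ (fun x => v x * h (τ x)) 0 :=
    hvan.fun_mul (AnalyticAt.fun_comp (by rwa [hτ0]) hτan)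
  have hτlim : Tendsto τ (𝓝 0) (𝓝 0) := by simpa only [hτ0] using hτan.continuousAt.tendsto
  have hslit : ∀ᶠ x in 𝓝 (0 : ℂ), 1 + κ * x ∈ slitPlane :=
    hasDerivAt_one_add_mul.continuousAt.eventually_mem (isOpen_slitPlane.mem_nhds (by simp))
  have hS : ContinuousAt (fun x => a - a * ω ^ n * v x / (1 + κ * x) ^ (n + 2)) 0 := by
    have := hvan.continuousAt
    exact continuousAt_const.sub (.div (by fun_prop) (by fun_prop) (by simp))
  have hdiff : ∀ᶠ x in 𝓝 (0 : ℂ), frobeniusOp (-n) V (fun y => h y - v y * h (τ y)) x =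
      x ^ n * (a - a * ω ^ n * v x / (1 + κ * x) ^ (n + 2)) := by
    filter_upwards [hVτ, ha, hτlim.eventually ha, hslit, hh.eventually_analyticAt,
      hgan.eventually_analyticAt, hτlim.eventually hh.eventually_analyticAt]
      with x hVx hax haτ hx hhx hgx hhτ
    have hx0 : 1 + κ * x ≠ 0 := slitPlane_ne_zero hx
    rw [frobeniusOp_sub hhx hgx, frobeniusOp_moebius hx hhτ hVx, hax, haτ]
    simp only [hτ, hv, div_pow, mul_pow, pow_add]
    field_simp
  have hS0 := eq_zero_of_frobeniusOp_neg_natCast_eq_pow_mul hV hV0 (hh.fun_sub hgan)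
    (by simp [hτ0, hv0]) hS hdiff
  simp only [hv0, mul_zero, add_zero, one_pow, mul_one, div_one] at hS0
  have hprod : a * (1 - ω ^ n) = 0 := by linear_combination hS0
  exact (mul_eq_zero.mp hprod).resolve_right (sub_ne_zero.mpr hω.symm)

end Moebius

/-! ### Squares of solutions -/

lemma eq_apply_zero_of_mul_deriv_eq_zero {f : ℂ → ℂ} {r : ℝ}
    (hf : DifferentiableOn ℂ f (Metric.ball 0 r))
    (hmul : ∀ x ∈ Metric.ball 0 r, x * deriv f x = 0) : ∀ x ∈ Metric.ball 0 r, f x = f 0 := by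
  intro x hx
  have h0 : (0 : ℂ) ∈ Metric.ball 0 r := Metric.mem_ball_self (Metric.pos_of_mem_ball hx)
  have hball := Metric.isOpen_ball.mem_nhds h0
  have hderiv : Set.EqOn (deriv f) 0 (Metric.ball 0 r) := by
    intro x hx
    rcases eq_or_ne x 0 with rfl | hx0
    · have hev : ∀ᶠ x in 𝓝 (0 : ℂ), x ^ 1 * deriv f x = x ^ (1 + 0) * 0 := by
        filter_upwards [hball] with x hx
        simpa using hmul x hx
      simpa using eq_zero_pow_mul_of_pow_mul_eq (hf.analyticAt hball).deriv.continuousAt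
        continuousAt_const hev
    · exact (mul_eq_zero.mp (hmul x hx)).resolve_left hx0
  exact Metric.isOpen_ball.is_const_of_deriv_eq_zero (convex_ball 0 r).isPreconnected hf hderiv
    hx h0

-- The left-hand side is the Wronskian of the solutions `x ^ ((1 - m) / 2) * h₂` and
-- `x ^ ((1 + m) / 2) * h₁` of `x² y″ = V y`.
lemma frobenius_wronskian_eq {m : ℂ} {V h₁ h₂ : ℂ → ℂ} {r : ℝ}
    (hd₁ : DifferentiableOn ℂ h₁ (Metric.ball 0 r)) (hd₂ : DifferentiableOn ℂ h₂ (Metric.ball 0 r))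
    (h₁0 : h₁ 0 = 1) (h₂0 : h₂ 0 = 1) (hop₁ : ∀ x ∈ Metric.ball 0 r, frobeniusOp m V h₁ x = 0)
    (hop₂ : ∀ x ∈ Metric.ball 0 r, frobeniusOp (-m) V h₂ x = 0) :
    ∀ x ∈ Metric.ball 0 r,
      m * (h₁ x * h₂ x) + x * (deriv h₁ x * h₂ x - h₁ x * deriv h₂ x) = m := by
  set W : ℂ → ℂ := fun x => m * (h₁ x * h₂ x) + x * (deriv h₁ x * h₂ x - h₁ x * deriv h₂ x) with hW
  have hWd : DifferentiableOn ℂ W (Metric.ball 0 r) := by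
    have := hd₁.deriv Metric.isOpen_ball
    have := hd₂.deriv Metric.isOpen_ball
    fun_prop
  have hmul : ∀ x ∈ Metric.ball 0 r, x * deriv W x = 0 := by
    intro x hx
    have hh₁ := hd₁.analyticAt (Metric.isOpen_ball.mem_nhds hx)
    have hh₂ := hd₂.analyticAt (Metric.isOpen_ball.mem_nhds hx)
    have hd₁ := hh₁.differentiableAt.hasDerivAt
    have hd₂ := hh₂.differentiableAt.hasDerivAt
    have hW' := ((hd₁.fun_mul hd₂).const_mul m).fun_add ((hasDerivAt_id' x).fun_mul
      ((hh₁.deriv.differentiableAt.hasDerivAt.fun_mul hd₂).fun_sub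
        (hd₁.fun_mul hh₂.deriv.differentiableAt.hasDerivAt)))
    have hop₁x := hop₁ x hx
    have hop₂x := hop₂ x hx
    rw [frobeniusOp] at hop₁x hop₂x
    rw [hW'.deriv]
    linear_combination h₂ x * hop₁x - h₁ x * hop₂x
  simpa [hW, h₁0, h₂0] using eq_apply_zero_of_mul_deriv_eq_zero hWd hmul

lemma exists_eq_mul_zpow_of_mul_deriv_eq {U : Set ℂ} (hU : IsOpen U) (hUc : IsPreconnected U)
    (hU0 : (0 : ℂ) ∉ U) {f : ℂ → ℂ} {μ : ℤ} (hf : DifferentiableOn ℂ f U)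
    (hμ : ∀ x ∈ U, x * deriv f x = μ * f x) : ∃ k : ℂ, ∀ x ∈ U, f x = k * x ^ μ := by
  rcases U.eq_empty_or_nonempty with rfl | ⟨u, hu⟩
  · exact ⟨0, by simp⟩
  have hne : ∀ x ∈ U, x ≠ 0 := fun x hx => ne_of_mem_of_not_mem hx hU0
  have hderiv : ∀ x ∈ U, HasDerivAt (fun x => f x * x ^ (-μ)) 0 x := by
    intro x hx
    have hx0 := hne x hx
    refine ((hf.differentiableAt (hU.mem_nhds hx)).hasDerivAt.fun_mul
      (hasDerivAt_zpow (-μ) x (Or.inl hx0))).congr_deriv ?_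
    rw [zpow_sub₀ hx0, zpow_one]
    field_simp
    push_cast
    linear_combination x ^ (-μ) * hμ x hx
  refine ⟨f u * u ^ (-μ), fun x hx => ?_⟩
  have hconst := hU.is_const_of_deriv_eq_zero hUc
    (fun y hy => (hderiv y hy).differentiableAt.differentiableWithinAt)
    (fun y hy => (hderiv y hy).deriv) hx hu
  rw [← hconst, mul_assoc, ← zpow_add₀ (hne x hx), neg_add_cancel, zpow_zero, mul_one]

/-- The Wronskian of `y` and `x ^ ρ * h`, where `ρ = (1 + m) / 2`, multiplied by `x ^ (1 - ρ)` so
that no fractional powers remain. -/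
def twistedWronskian (m : ℂ) (h y : ℂ → ℂ) (x : ℂ) : ℂ :=
  y x * ((1 + m) / 2 * h x + x * deriv h x) - x * deriv y x * h x

lemma hasDerivAt_twistedWronskian {m : ℂ} {V h y : ℂ → ℂ} {x : ℂ} (hh : AnalyticAt ℂ h x)
    (hop : frobeniusOp m V h x = 0) (hy : AnalyticAt ℂ y x)
    (hode : x ^ 2 * deriv (deriv y) x = V x * y x) :
    ∃ W', HasDerivAt (twistedWronskian m h y) W' x ∧
      x * W' = (1 - m) / 2 * twistedWronskian m h y x := by
  have hh' := hh.differentiableAt.hasDerivAt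
  refine ⟨_, (hy.differentiableAt.hasDerivAt.fun_mul ((hh'.const_mul ((1 + m) / 2)).fun_add
    ((hasDerivAt_id' x).fun_mul hh.deriv.differentiableAt.hasDerivAt))).fun_sub
      (((hasDerivAt_id' x).fun_mul hy.deriv.differentiableAt.hasDerivAt).fun_mul hh'), ?_⟩
  rw [frobeniusOp] at hop
  rw [twistedWronskian]
  linear_combination y x * hop - h x * hode

section Solution

variable {V h₁ h₂ y : ℂ → ℂ} {r : ℝ} {U : Set ℂ}

lemma exists_twistedWronskian_mul_eq {m₁ m₂ : ℂ} {μ : ℤ} (hμ : (1 - m₁) / 2 + (1 - m₂) / 2 = μ)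
    (hd₁ : DifferentiableOn ℂ h₁ U) (hd₂ : DifferentiableOn ℂ h₂ U)
    (hop₁ : ∀ x ∈ U, frobeniusOp m₁ V h₁ x = 0) (hop₂ : ∀ x ∈ U, frobeniusOp m₂ V h₂ x = 0)
    (hU : IsOpen U) (hUc : IsPreconnected U) (hU0 : (0 : ℂ) ∉ U) (hy : DifferentiableOn ℂ y U)
    (hode : ∀ x ∈ U, x ^ 2 * deriv (deriv y) x = V x * y x) :
    ∃ k : ℂ, ∀ x ∈ U, twistedWronskian m₁ h₁ y x * twistedWronskian m₂ h₂ y x = k * x ^ μ := by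
  have hderiv : ∀ x ∈ U, ∃ P', HasDerivAt
      (fun x => twistedWronskian m₁ h₁ y x * twistedWronskian m₂ h₂ y x) P' x ∧
      x * P' = μ * (twistedWronskian m₁ h₁ y x * twistedWronskian m₂ h₂ y x) := by
    intro x hx
    have hxU := hU.mem_nhds hx
    obtain ⟨W₁, hW₁, hxW₁⟩ := hasDerivAt_twistedWronskian (hd₁.analyticAt hxU) (hop₁ x hx)
      (hy.analyticAt hxU) (hode x hx)
    obtain ⟨W₂, hW₂, hxW₂⟩ := hasDerivAt_twistedWronskian (hd₂.analyticAt hxU) (hop₂ x hx)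
      (hy.analyticAt hxU) (hode x hx)
    refine ⟨_, hW₁.fun_mul hW₂, ?_⟩
    rw [← hμ]
    linear_combination twistedWronskian m₂ h₂ y x * hxW₁ + twistedWronskian m₁ h₁ y x * hxW₂
  refine exists_eq_mul_zpow_of_mul_deriv_eq hU hUc hU0 (fun x hx => ?_) fun x hx => ?_
  · obtain ⟨P', hP', -⟩ := hderiv x hx
    exact hP'.differentiableAt.differentiableWithinAt
  · obtain ⟨P', hP', hxP'⟩ := hderiv x hx
    rw [hP'.deriv, hxP']

-- `n * y` is the combination `P * h₂ - R * h₁` with twisted Wronskians `P` and `R` as coefficients,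
-- and `P²`, `P * R`, `R²` are constant multiples of integral powers of `x`.
lemma exists_meromorphicOn_eq_sq {n : ℕ} (hn : n ≠ 0)
    (hd₁ : DifferentiableOn ℂ h₁ (Metric.ball 0 r)) (hd₂ : DifferentiableOn ℂ h₂ (Metric.ball 0 r))
    (h₁0 : h₁ 0 = 1) (h₂0 : h₂ 0 = 1) (hop₁ : ∀ x ∈ Metric.ball 0 r, frobeniusOp n V h₁ x = 0)
    (hop₂ : ∀ x ∈ Metric.ball 0 r, frobeniusOp (-n) V h₂ x = 0) (hU : IsOpen U)
    (hUc : IsPreconnected U) (hUr : U ⊆ Metric.ball 0 r \ {0}) (hy : DifferentiableOn ℂ y U)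
    (hode : ∀ x ∈ U, x ^ 2 * deriv (deriv y) x = V x * y x) :
    ∃ g : ℂ → ℂ, MeromorphicOn g (Metric.ball 0 r) ∧ ∀ x ∈ U, g x = y x ^ 2 := by
  have hUball : U ⊆ Metric.ball 0 r := hUr.trans Set.sdiff_subset
  have hU0 : (0 : ℂ) ∉ U := fun h => (hUr h).2 rfl
  have hdU₁ := hd₁.mono hUball
  have hdU₂ := hd₂.mono hUball
  have hopU₁ : ∀ x ∈ U, frobeniusOp n V h₁ x = 0 := fun x hx => hop₁ x (hUball hx)
  have hopU₂ : ∀ x ∈ U, frobeniusOp (-n) V h₂ x = 0 := fun x hx => hop₂ x (hUball hx)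
  obtain ⟨a, ha⟩ := exists_twistedWronskian_mul_eq (μ := 1 - n) (by push_cast; ring)
    hdU₁ hdU₁ hopU₁ hopU₁ hU hUc hU0 hy hode
  obtain ⟨b, hb⟩ := exists_twistedWronskian_mul_eq (μ := 1) (by push_cast; ring)
    hdU₁ hdU₂ hopU₁ hopU₂ hU hUc hU0 hy hode
  obtain ⟨c, hc⟩ := exists_twistedWronskian_mul_eq (μ := 1 + n) (by push_cast; ring)
    hdU₂ hdU₂ hopU₂ hopU₂ hU hUc hU0 hy hode
  refine ⟨fun x => (a * x ^ (1 - n : ℤ) * h₂ x ^ 2 - 2 * (b * x ^ (1 : ℤ)) * (h₁ x * h₂ x) +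
    c * x ^ (1 + n : ℤ) * h₁ x ^ 2) / n ^ 2, fun x hx => ?_, fun x hx => ?_⟩
  · have := (hd₁.analyticAt (Metric.isOpen_ball.mem_nhds hx)).meromorphicAt
    have := (hd₂.analyticAt (Metric.isOpen_ball.mem_nhds hx)).meromorphicAt
    fun_prop
  · have hsolution :
        n * y x = twistedWronskian n h₁ y x * h₂ x - twistedWronskian (-n) h₂ y x * h₁ x := by
      rw [twistedWronskian, twistedWronskian]
      linear_combination
        -y x * frobenius_wronskian_eq hd₁ hd₂ h₁0 h₂0 hop₁ hop₂ x (hUball hx)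
    beta_reduce
    rw [← ha x hx, ← hb x hx, ← hc x hx, div_eq_iff (by positivity), ← mul_pow,
      mul_comm (y x), hsolution]
    ring

end Solution

/-! ### Apparent singularities -/

/-- Every local solution of `y″ = F y` on a connected open subset of the punctured disc of radius
`r` about `z₀` has a square that extends meromorphically to the whole disc. For half-integral
exponents this says that the singularity `z₀` is apparent. -/
def IsApparentOn (F : ℂ → ℂ) (z₀ : ℂ) (r : ℝ) : Prop :=
  ∀ U : Set ℂ, IsOpen U → U ⊆ Metric.ball z₀ r \ {z₀} → IsPreconnected U →
    ∀ y : ℂ → ℂ, DifferentiableOn ℂ y U → (∀ z ∈ U, deriv (deriv y) z = F z * y z) →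
      ∃ g : ℂ → ℂ, MeromorphicOn g (Metric.ball z₀ r) ∧ ∀ z ∈ U, g z = y z ^ 2

lemma IsApparentOn.of_comp_add {F : ℂ → ℂ} {z₀ : ℂ} {r : ℝ}
    (h : IsApparentOn (fun x => F (z₀ + x)) 0 r) : IsApparentOn F z₀ r := by
  intro U hU hUr hUc y hy hode
  obtain ⟨g, hg, hgy⟩ := h ((fun x => z₀ + x) ⁻¹' U) (hU.preimage (by fun_prop))
    (fun x hx => by simpa [dist_eq_norm] using hUr hx)
    (hUc.preimage_of_isOpenMap (add_right_injective z₀) (isOpenMap_add_left z₀)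
      fun z _ => ⟨z - z₀, by simp⟩)
    (fun x => y (z₀ + x)) (hy.comp (by fun_prop) fun x hx => hx) fun x hx => by
      simpa only [deriv_comp_const_add, funext (deriv_comp_const_add y z₀)] using hode _ hx
  refine ⟨fun z => g (z - z₀), fun z hz => ?_, fun z hz => ?_⟩
  · have := hg (z - z₀) (by simpa [dist_eq_norm] using hz)
    exact this.comp_analyticAt (f := g) (g := fun z => z - z₀) (by fun_prop)
  · simpa using hgy (z - z₀) (by simpa using hz)

lemma exists_differentiableOn_ball_of_tendsto {f : ℂ → ℂ} {z₀ L : ℂ} {r : ℝ} (hr : 0 < r)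
    (hf : DifferentiableOn ℂ f (Metric.ball z₀ r \ {z₀})) (hlim : Tendsto f (𝓝[≠] z₀) (𝓝 L)) :
    ∃ g, DifferentiableOn ℂ g (Metric.ball z₀ r) ∧ g z₀ = L ∧ ∀ z ≠ z₀, g z = f z := by
  have hne : ∀ z ≠ z₀, Function.update f z₀ L z = f z := fun z hz => Function.update_of_ne hz ..
  refine ⟨Function.update f z₀ L, ?_, Function.update_self .., hne⟩
  exact (differentiableOn_compl_singleton_and_continuousAt_iff (Metric.ball_mem_nhds z₀ hr)).mp
    ⟨hf.congr fun z hz => hne z hz.2, continuousAt_update_same.mpr hlim⟩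

lemma isApparentOn_zero_of_moebius_symmetry {F : ℂ → ℂ} {r : ℝ} {n : ℕ} {κ ω : ℂ} (hr : 0 < r)
    (hF : DifferentiableOn ℂ F (Metric.ball 0 r \ {0}))
    (hlim : Tendsto (fun x => x ^ 2 * F x) (𝓝[≠] 0) (𝓝 (((n : ℂ) ^ 2 - 1) / 4)))
    (hω : ω ^ n ≠ 1) (hω0 : ω ≠ 0)
    (hFτ : ∀ᶠ x in 𝓝[≠] (0 : ℂ), ω ^ 2 * F (ω * x / (1 + κ * x)) = (1 + κ * x) ^ 4 * F x) :
    IsApparentOn F 0 r := by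
  obtain ⟨V, hVd, hV0, hVne⟩ := exists_differentiableOn_ball_of_tendsto hr
    ((differentiableOn_pow 2).fun_mul hF) hlim
  have hVτ : ∀ᶠ x in 𝓝 (0 : ℂ), V (ω * x / (1 + κ * x)) = (1 + κ * x) ^ 2 * V x := by
    have hJ : ∀ᶠ x in 𝓝 (0 : ℂ), 1 + κ * x ≠ 0 :=
      ContinuousAt.eventually_ne (by fun_prop) (by simp)
    filter_upwards [eventually_nhdsWithin_iff.mp hFτ, hJ] with x hFx hJx
    rcases eq_or_ne x 0 with rfl | hx
    · simp
    · rw [hVne x hx, hVne _ (div_ne_zero (mul_ne_zero hω0 hx) hJx), div_pow, mul_pow]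
      rw [div_mul_eq_mul_div, div_eq_iff (pow_ne_zero 2 hJx)]
      linear_combination x ^ 2 * hFx hx
  have hn : n ≠ 0 := by
    rintro rfl
    exact hω (pow_zero ω)
  obtain ⟨h₁, hd₁, h₁0, hop₁⟩ := exists_frobeniusOp_natCast_eq_zero n hVd hV0
  obtain ⟨h₂, a, hd₂, h₂0, hop₂⟩ := exists_frobeniusOp_neg_natCast_eq n hVd hV0
  have hball := Metric.ball_mem_nhds (0 : ℂ) hr
  have ha : a = 0 := eq_zero_of_frobeniusOp_neg_natCast_eq_mul_pow
    (hVd.differentiableAt hball).continuousAt hV0 hVτ hω (hd₂.analyticAt hball)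
    (eventually_of_mem hball hop₂)
  intro U hU hUr hUc y hy hode
  refine exists_meromorphicOn_eq_sq hn hd₁ hd₂ h₁0 h₂0 hop₁ (fun x hx => ?_) hU hUc hUr hy
    fun x hx => ?_
  · rw [hop₂ x hx, ha, zero_mul]
  · rw [hVne x (hUr hx).2, hode x hx, mul_assoc]

/-! ### Stabilizers in `SL(2, ℝ)` -/

lemma coe_smul_eq_moeb (γ : SL2R) (z : UpperHalfPlane) :
    ((γ • z : UpperHalfPlane) : ℂ) = moeb γ z :=
  UpperHalfPlane.coe_specialLinearGroup_apply γ z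

lemma jfac_ne_zero (γ : SL2R) {z : ℂ} (hz : z ∈ UHP) : jfac γ z ≠ 0 :=
  UpperHalfPlane.denom_ne_zero γ ⟨z, hz⟩

lemma jfac_mul (γ δ : SL2R) {z : ℂ} (hz : z ∈ UHP) :
    jfac (γ * δ) z = jfac γ (moeb δ z) * jfac δ z := by
  have hcocycle := UpperHalfPlane.denom_cocycle (γ : GL (Fin 2) ℝ) δ (ne_of_gt hz)
  rw [← map_mul] at hcocycle
  exact hcocycle

lemma moeb_sub_moeb (γ : SL2R) {w z : ℂ} (hw : jfac γ w ≠ 0) (hz : jfac γ z ≠ 0) :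
    moeb γ w - moeb γ z = (w - z) / (jfac γ w * jfac γ z) := by
  have hdet : (γ.1 0 0 : ℂ) * γ.1 1 1 - γ.1 0 1 * γ.1 1 0 = 1 := by
    exact_mod_cast (Matrix.det_fin_two γ.1).symm.trans γ.2
  rw [moeb, moeb, ← jfac, ← jfac, div_sub_div _ _ hw hz, jfac, jfac]
  congr 1
  linear_combination (w - z) * hdet

/-- The automorphy factor at `z`, as a character of the stabilizer of `z`. -/
def jfacStabilizer (z : UpperHalfPlane) : MulAction.stabilizer SL2R z →* ℂˣ :=
  MonoidHom.mk' (fun γ => Units.mk0 (jfac γ z) (jfac_ne_zero γ z.im_pos)) fun γ δ => by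
    have hδ : moeb δ z = z := by rw [← coe_smul_eq_moeb, δ.2]
    ext
    simp [jfac_mul _ _ z.im_pos, hδ]

lemma eq_and_eq_of_mul_add_eq {a b c d : ℝ} (z : UpperHalfPlane)
    (h : (a : ℂ) * z + b = c * z + d) : a = c ∧ b = d := by
  have hzero : ![a - c, b - d] = 0 := by
    by_contra hne
    refine UpperHalfPlane.linear_ne_zero z hne ?_
    simp only [cons_val_zero, cons_val_one]
    push_cast
    linear_combination h
  exact ⟨sub_eq_zero.mp (congrFun hzero 0), sub_eq_zero.mp (congrFun hzero 1)⟩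

lemma jfacStabilizer_injective (z : UpperHalfPlane) : Function.Injective (jfacStabilizer z) := by
  rw [injective_iff_map_eq_one]
  rintro ⟨γ, hγ⟩ hone
  have hjfac : jfac γ z = 1 := congrArg Units.val hone
  have hmoeb : moeb γ z = z := by rw [← coe_smul_eq_moeb, hγ]
  rw [moeb, ← jfac, hjfac, div_one] at hmoeb
  obtain ⟨ha, hb⟩ := eq_and_eq_of_mul_add_eq (c := 1) (d := 0) z (by simpa using hmoeb)
  obtain ⟨hc, hd⟩ := eq_and_eq_of_mul_add_eq (c := 0) (d := 1) z (by simpa [jfac] using hjfac)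
  ext i j
  fin_cases i <;> fin_cases j <;> simp [ha, hb, hc, hd]

-- Otherwise the stabilizer embeds into the group of `N`-th roots of unity, which has order `N`.
lemma exists_jfac_pow_ne_one (Γ : Subgroup SL2R) {z : ℂ} (hz : z ∈ UHP) {N : ℕ}
    (hN : ¬ Set.ncard {γ : SL2R | γ ∈ Γ ∧ moeb γ z = z} ∣ N) :
    ∃ γ ∈ Γ, moeb γ z = z ∧ jfac γ z ^ N ≠ 1 := by
  by_contra! hroot
  lift z to UpperHalfPlane using hz
  have hmem (γ : SL2R) : γ ∈ MulAction.stabilizer SL2R z ↔ moeb γ z = z := by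
    rw [MulAction.mem_stabilizer_iff, UpperHalfPlane.ext_iff, coe_smul_eq_moeb]
  have : NeZero N := ⟨fun h => hN (h ▸ dvd_zero _)⟩
  let S := Γ ⊓ MulAction.stabilizer SL2R z
  have hcard : Nat.card S = Set.ncard {γ : SL2R | γ ∈ Γ ∧ moeb γ z = z} := by
    rw [← Nat.card_coe_set_eq]
    exact Nat.card_congr (Equiv.subtypeEquivRight fun γ => and_congr_right' (hmem γ))
  let χ : S →* ℂˣ := (jfacStabilizer z).comp (Subgroup.inclusion inf_le_right)
  have hχ : Function.Injective χ :=
    (jfacStabilizer_injective z).comp (Subgroup.inclusion_injective inf_le_right)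
  have hχN (γ : S) : χ γ ∈ rootsOfUnity N ℂ := by
    rw [mem_rootsOfUnity']
    exact hroot γ γ.2.1 ((hmem γ).mp γ.2.2)
  have hdvd := Subgroup.card_dvd_of_injective (χ.codRestrict _ hχN)
    ((χ.injective_codRestrict _ hχN).mpr hχ)
  rw [hcard, Complex.card_rootsOfUnity] at hdvd
  exact hN hdvd

/-! ### Modular differential equations -/

lemma jfac_add {γ : SL2R} {z : ℂ} (hz : jfac γ z ≠ 0) (x : ℂ) :
    jfac γ (z + x) = jfac γ z * (1 + γ.1 1 0 / jfac γ z * x) := by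
  rw [mul_add, mul_one, ← mul_assoc, mul_div_cancel₀ _ hz, jfac, jfac]
  ring

lemma moeb_add_of_moeb_eq_self {γ : SL2R} {z x : ℂ} (hγ : moeb γ z = z) (hz : jfac γ z ≠ 0)
    (hzx : jfac γ (z + x) ≠ 0) :
    moeb γ (z + x) = z + (jfac γ z ^ 2)⁻¹ * x / (1 + γ.1 1 0 / jfac γ z * x) := by
  have hsub := moeb_sub_moeb γ hzx hz
  rw [hγ, add_sub_cancel_left, sub_eq_iff_eq_add'] at hsub
  rw [jfac_add hz] at hsub hzx
  rw [hsub, mul_right_comm, ← sq, ← div_div, inv_mul_eq_div]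

lemma isApparentOn_of_jfac_pow_ne_one {γ : SL2R} {F : ℂ → ℂ}
    (hF : ∀ z ∈ UHP, F (moeb γ z) = jfac γ z ^ 4 * F z) {z₀ : ℂ} (hγ : moeb γ z₀ = z₀) {n : ℕ}
    (hn : jfac γ z₀ ^ (2 * n) ≠ 1)
    (hlim : Tendsto (fun z => (z - z₀) ^ 2 * F z) (𝓝[≠] z₀) (𝓝 (((n : ℂ) ^ 2 - 1) / 4)))
    {r : ℝ} (hr : 0 < r) (hball : Metric.ball z₀ r ⊆ UHP)
    (hFr : DifferentiableOn ℂ F (Metric.ball z₀ r \ {z₀})) : IsApparentOn F z₀ r := by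
  have hj : jfac γ z₀ ≠ 0 := jfac_ne_zero γ (hball (Metric.mem_ball_self hr))
  have hadd : Tendsto (fun x => z₀ + x) (𝓝[≠] 0) (𝓝[≠] z₀) := by
    refine tendsto_nhdsWithin_iff.mpr ⟨?_, ?_⟩
    · exact (Continuous.tendsto' (by fun_prop) 0 z₀ (add_zero z₀)).mono_left nhdsWithin_le_nhds
    · filter_upwards [self_mem_nhdsWithin] with x hx
      simpa using hx
  refine .of_comp_add (isApparentOn_zero_of_moebius_symmetry (n := n) (ω := (jfac γ z₀ ^ 2)⁻¹)
    (κ := γ.1 1 0 / jfac γ z₀) hr ?_ ?_ ?_ ?_ ?_)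
  · exact hFr.comp (by fun_prop) fun x hx => by simpa [dist_eq_norm] using hx
  · simpa [Function.comp_def] using hlim.comp hadd
  · rwa [inv_pow, ← pow_mul, ne_eq, inv_eq_one]
  · exact inv_ne_zero (pow_ne_zero 2 hj)
  · filter_upwards [hadd.eventually (nhdsWithin_le_nhds (Metric.ball_mem_nhds z₀ hr))] with x hx
    have hFx := hF (z₀ + x) (hball hx)
    rw [moeb_add_of_moeb_eq_self hγ hj (jfac_ne_zero γ (hball hx)), jfac_add hj] at hFx
    rw [hFx]
    field_simp

-- For an infinite stabilizer `Set.ncard` is `0`, and `hstab` reads `n ≠ 0`.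
theorem apparent_at_elliptic_point_general (Γ : Subgroup SL2R) (Q : ℂ → ℂ)
    (hQmod : ∀ γ ∈ Γ, ∀ z ∈ UHP, Q (moeb γ z) = jfac γ z ^ 4 * Q z) (z₀ : ℂ) (n : ℤ)
    (hstab : ¬ (Set.ncard {γ : SL2R | γ ∈ Γ ∧ moeb γ z₀ = z₀} : ℤ) ∣ 2 * n)
    (hlim : Tendsto (fun z : ℂ => (z - z₀) ^ 2 * Q z) (𝓝[≠] z₀)
      (𝓝 ((1 / 4 - ((n : ℂ) / 2) ^ 2) / (4 * (Real.pi : ℂ) ^ 2))))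
    (r : ℝ) (hr : 0 < r) (hball : Metric.ball z₀ r ⊆ UHP)
    (hQr : DifferentiableOn ℂ Q (Metric.ball z₀ r \ {z₀})) :
    IsApparentOn (fun z => -(4 * (Real.pi : ℂ) ^ 2) * Q z) z₀ r := by
  have hstab' : ¬ Set.ncard {γ : SL2R | γ ∈ Γ ∧ moeb γ z₀ = z₀} ∣ 2 * n.natAbs := by
    rwa [Int.natCast_dvd, Int.natAbs_mul] at hstab
  obtain ⟨γ, hγΓ, hγ, hpow⟩ :=
    exists_jfac_pow_ne_one Γ (hball (Metric.mem_ball_self hr)) hstab'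
  refine isApparentOn_of_jfac_pow_ne_one (fun z hz => ?_) hγ hpow ?_ hr hball (hQr.const_mul _)
  · rw [hQmod γ hγΓ z hz]
    ring
  · have hpi : (Real.pi : ℂ) ≠ 0 := ofReal_ne_zero.mpr Real.pi_ne_zero
    have hsq : (n.natAbs : ℂ) ^ 2 = (n : ℂ) ^ 2 := by
      rw [← Int.cast_natCast, ← Int.cast_pow, Int.natAbs_sq, Int.cast_pow]
    have hvalue : ((n.natAbs : ℂ) ^ 2 - 1) / 4 = -(4 * (Real.pi : ℂ) ^ 2) *
        ((1 / 4 - ((n : ℂ) / 2) ^ 2) / (4 * (Real.pi : ℂ) ^ 2)) := by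
      rw [hsq]
      field_simp
      ring
    rw [hvalue]
    exact (hlim.const_mul _).congr fun z => by ring

/-- Theorem: a modular differential equation is apparent at an
elliptic point `z₀` of order `e` whenever `e ∤ 2κ_{z₀}`: every local solution `y` of
`y″ = -4π²Qy` near `z₀` has single-valued square, i.e. `y²` extends to a meromorphic
function on a full disk around `z₀`. -/
theorem apparent_at_elliptic_point
    (Γ : Subgroup SL2R) (hcomm : Subgroup.Commensurable SL2ZR Γ) (hnegI : negI ∈ Γ)
    (Q : ℂ → ℂ) (hQne : ∃ z ∈ UHP, Q z ≠ 0)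
    (hQmod : ∀ γ ∈ Γ, ∀ z ∈ UHP, Q (moeb γ z) = jfac γ z ^ 4 * Q z)
    (z₀ : ℂ) (hz₀ : z₀ ∈ UHP)
    (e : ℕ) (he : 2 ≤ e)
    (hstab : Set.ncard {γ : SL2R | γ ∈ Γ ∧ moeb γ z₀ = z₀} = 2 * e)
    (n : ℤ) (hn : 0 < n) (hne : ¬ ((e : ℤ) ∣ n))   -- `κ = n/2 ∈ (1/2)ℤ`, `κ > 0`, `e ∤ 2κ`
    (A : ℂ) (hA : A = (1 / 4 - ((n : ℂ) / 2) ^ 2) / (4 * (Real.pi : ℂ) ^ 2))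
    (hlim : Tendsto (fun z : ℂ => (z - z₀) ^ 2 * Q z) (𝓝[≠] z₀) (𝓝 A))
    (r : ℝ) (hr : 0 < r) (hball : Metric.ball z₀ r ⊆ UHP)
    (hQr : DifferentiableOn ℂ Q (Metric.ball z₀ r \ {z₀})) :
    ∀ U : Set ℂ, IsOpen U → U ⊆ Metric.ball z₀ r \ {z₀} → SimplyConnectedSpace U →
      ∀ y : ℂ → ℂ, DifferentiableOn ℂ y U →
      (∀ z ∈ U, deriv (deriv y) z = -(4 * (Real.pi : ℂ) ^ 2) * Q z * y z) →
      ∃ g : ℂ → ℂ, MeromorphicOn g (Metric.ball z₀ r) ∧ ∀ z ∈ U, g z = y z ^ 2 := by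
  intro U hU hUr hUs y hy hode
  have hdvd : ¬ (Set.ncard {γ : SL2R | γ ∈ Γ ∧ moeb γ z₀ = z₀} : ℤ) ∣ 2 * n := by
    rwa [hstab, Nat.cast_mul, Nat.cast_ofNat, mul_dvd_mul_iff_left two_ne_zero]
  exact apparent_at_elliptic_point_general Γ Q hQmod z₀ n hdvd (hA ▸ hlim) r hr hball hQr U hU hUr
    (isPreconnected_iff_preconnectedSpace.mpr inferInstance) y hy hode
end
end
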